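/- arXiv:1510.03381 — 2 statements merged into one kernel-verified Lean document; each statement's English description precedes it below -/
import Mathlib

section
/- If G is a finite simple graph with maximum average degree Mad(G) < 5/2, then G has an I,F-partition. -/
open SimpleGraph

noncomputable def edgeCount {V : Type*} (G : SimpleGraph V) : ℕ := Nat.card G.edgeSet

noncomputable def deg {V : Type*} (G : SimpleGraph V) (v : V) : ℕ := Nat.card (G.neighborSet v)

def TwoIndependent {V : Type*} (G : SimpleGraph V) (S : Set V) : Prop :=
  ∀ u ∈ S, ∀ v ∈ S, u ≠ v → ¬ G.Adj u v ∧ ∀ w, ¬ (G.Adj u w ∧ G.Adj w v)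

def IsIFPartition {V : Type*} (G : SimpleGraph V) (A B : Set V) : Prop :=
  A ∪ B = Set.univ ∧ Disjoint A B ∧ TwoIndependent G A ∧ (G.induce B).IsAcyclic

def IsAssignment {V : Type*} (I F U : Set V) : Prop :=
  I ∪ F ∪ U = Set.univ ∧ Disjoint I F ∧ Disjoint I U ∧ Disjoint F U

noncomputable def rho {V : Type*} (G : SimpleGraph V) (I F U : Set V) (H : G.Subgraph) : ℤ :=
  (H.verts ∩ I).ncard + 4 * (H.verts ∩ F).ncard + 5 * (H.verts ∩ U).ncard
    - 4 * Nat.card H.edgeSet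

noncomputable def rhoSet {V : Type*} (G : SimpleGraph V) (I F U : Set V) (S : Set V) : ℤ :=
  (S ∩ I).ncard + 4 * (S ∩ F).ncard + 5 * (S ∩ U).ncard - 4 * edgeCount (G.induce S)

def IsCounterexample {V : Type*} [Fintype V] (G : SimpleGraph V) (I F U : Set V) : Prop :=
  IsAssignment I F U ∧
  (∀ H : G.Subgraph, H.verts.Nonempty → 0 < rho G I F U H) ∧
  ¬ ∃ A B : Set V, IsIFPartition G A B ∧ I ⊆ A ∧ F ⊆ B

def IsMinCounterexample {V : Type*} [Fintype V] (G : SimpleGraph V) (I F U : Set V) : Prop :=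
  IsCounterexample G I F U ∧
  ∀ (n : ℕ) (G' : SimpleGraph (Fin n)) (I' F' U' : Set (Fin n)),
    IsCounterexample G' I' F' U' →
    Fintype.card V + edgeCount G ≤ n + edgeCount G'

def IsThread {V : Type*} (G : SimpleGraph V) (I F U : Set V) (p : List V) : Prop :=
  p ≠ [] ∧ p.Nodup ∧ p.Chain' G.Adj ∧ (∀ v ∈ p, v ∈ U ∧ deg G v = 2) ∧
  (∀ w, w ∉ p → (∃ a ∈ p, G.Adj a w) → 3 ≤ deg G w ∨ w ∈ I ∪ F)

def BordersThread {V : Type*} (G : SimpleGraph V) (p : List V) (w : V) : Prop :=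
  w ∉ p ∧ ∃ a ∈ p, G.Adj a w

def IsStarForest {V : Type*} (H : SimpleGraph V) : Prop :=
  H.IsAcyclic ∧ ∀ a b c d : V, H.Adj a b → H.Adj b c → H.Adj c d → a = c ∨ b = d

def IsStarColoring {V : Type*} {k : ℕ} (G : SimpleGraph V) (c : V → Fin k) : Prop :=
  (∀ u v, G.Adj u v → c u ≠ c v) ∧
  ∀ i j : Fin k, IsStarForest (G.induce {v | c v = i ∨ c v = j})

def StarColorable {V : Type*} (G : SimpleGraph V) (k : ℕ) : Prop :=
  ∃ c : V → Fin k, IsStarColoring G c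

def MadLt {V : Type*} (G : SimpleGraph V) (q : ℚ) : Prop :=
  ∀ H : G.Subgraph, H.verts.Nonempty →
    (2 * (Nat.card H.edgeSet : ℚ)) / (H.verts.ncard : ℚ) < q

/-!
The proof is by the potential method. Give every vertex a weight: weight `5` means unrestricted,
a vertex of weight at most `4` has to lie in the forest `𝓕`, and one of weight at most `2` must
moreover have no neighbour in `𝓘`. The potential of a vertex set `S` is `∑ w v - 4 e(S)`; for
constant weight `5`, all nonempty sets have positive potential exactly when `Mad(G) < 5/2`. By
induction on the number of vertices, positive potentials give a partition respecting the weights.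

In a minimal counterexample every proper vertex set `S` with at least two vertices has potential at
least `3`: otherwise one takes `S` maximal, partitions `S`, and then partitions the rest together
with `S` contracted to a single vertex of weight `2`. This slack pays for lowering a few weights, or
for replacing a vertex by an edge between two of its neighbours, and thereby excludes several
configurations around free vertices, that is, vertices of weight `5` and degree two. Finally give
every vertex the charge `6 (w v - 2 deg v)`. All degrees are at least two, so only free vertices
have positive charge; they pass their charge `6` on to their neighbours, after which no charge is
positive. So the potential of the whole graph is not positive, a contradiction.
-/

namespace IFPartition

open Finset

variable {V : Type*} {G H : SimpleGraph V} {w w' : V → ℤ} {A B S T W : Finset V}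

open Classical in
/-- The neighbours of `v` inside the vertex set `S`. -/
noncomputable def nbrs (G : SimpleGraph V) (S : Finset V) (v : V) : Finset V := {u ∈ S | G.Adj v u}

/-- The number of neighbours of `v` inside `S`, an integer because potentials are. -/
noncomputable def degOn (G : SimpleGraph V) (S : Finset V) (v : V) : ℤ := #(nbrs G S v)

/-- The potential `∑ w v - 4 e(S)` of a vertex set, with `2 e(S)` written as a degree sum. -/
noncomputable def potential (G : SimpleGraph V) (w : V → ℤ) (S : Finset V) : ℤ :=
  ∑ v ∈ S, (w v - 2 * degOn G S v)

/-- `G` restricted to `B` is a forest, expressed by counting: `4 (|S| - e(S))` is positive for every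
nonempty `S ⊆ B`. -/
def IsForestOn (G : SimpleGraph V) (B : Finset V) : Prop :=
  ∀ S ⊆ B, S.Nonempty → 0 < potential G (fun _ ↦ 4) S

lemma mem_nbrs {u v : V} : u ∈ nbrs G S v ↔ u ∈ S ∧ G.Adj v u := by
  simp [nbrs]

lemma nbrs_subset (v : V) : nbrs G S v ⊆ S := fun _ hu ↦ (mem_nbrs.1 hu).1

lemma nbrs_mono (h : S ⊆ T) (v : V) : nbrs G S v ⊆ nbrs G T v :=
  fun _ hu ↦ mem_nbrs.2 ⟨h (mem_nbrs.1 hu).1, (mem_nbrs.1 hu).2⟩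

lemma degOn_nonneg (v : V) : 0 ≤ degOn G S v := Int.natCast_nonneg _

lemma degOn_mono (h : S ⊆ T) (v : V) : degOn G S v ≤ degOn G T v :=
  Int.ofNat_le.2 (card_le_card (nbrs_mono h v))

lemma degOn_le_degOn {v : V} (hG : ∀ u ∈ S, G.Adj v u → H.Adj v u) : degOn G S v ≤ degOn H S v :=
  Int.ofNat_le.2 <| card_le_card fun u hu ↦
    mem_nbrs.2 ⟨(mem_nbrs.1 hu).1, hG u (mem_nbrs.1 hu).1 (mem_nbrs.1 hu).2⟩

lemma degOn_le_one_iff {v : V} :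
    degOn G S v ≤ 1 ↔ ∀ p ∈ S, G.Adj v p → ∀ q ∈ S, G.Adj v q → p = q := by
  rw [degOn, Nat.cast_le_one, card_le_one]
  simp only [mem_nbrs, and_imp]

lemma one_le_degOn_iff {v : V} : 1 ≤ degOn G S v ↔ ∃ u ∈ S, G.Adj v u := by
  rw [degOn, Nat.one_le_cast, one_le_card]
  simp only [Finset.Nonempty, mem_nbrs]

lemma two_le_degOn_of_adj {v p q : V} (hp : p ∈ S) (hq : q ∈ S) (hpq : p ≠ q) (hvp : G.Adj v p)
    (hvq : G.Adj v q) : 2 ≤ degOn G S v := by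
  by_contra! hlt
  exact hpq (degOn_le_one_iff.1 (Int.le_of_lt_add_one hlt) p hp hvp q hq hvq)

open Classical in
lemma degOn_eq_sum (v : V) : degOn G S v = ∑ u ∈ S, if G.Adj v u then 1 else 0 := by
  simp [degOn, nbrs]

lemma sum_degOn_comm : ∑ v ∈ T, degOn G S v = ∑ u ∈ S, degOn G T u := by
  simp only [degOn_eq_sum]
  rw [sum_comm]
  exact sum_congr rfl fun u _ ↦ sum_congr rfl fun v _ ↦ by rw [G.adj_comm]

lemma potential_singleton (v : V) : potential G w {v} = w v := by
  simp [potential, degOn_eq_sum]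

lemma potential_mono (hG : ∀ u ∈ S, ∀ v ∈ S, G.Adj u v → H.Adj u v) (hw : ∀ v ∈ S, w v ≤ w' v) :
    potential H w S ≤ potential G w' S :=
  sum_le_sum fun v hv ↦ by linarith [hw v hv, degOn_le_degOn (hG v hv)]

lemma sup_edge_adj {a b c y : V} (h : c ≠ y) :
    (G ⊔ edge c y).Adj a b ↔ G.Adj a b ∨ a = c ∧ b = y ∨ a = y ∧ b = c := by
  grind

lemma potential_le_potential_sup_edge {c y : V} (h : c ≠ y) (hT : ¬ (c ∈ T ∧ y ∈ T)) :
    potential G w T ≤ potential (G ⊔ edge c y) w T := by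
  refine potential_mono (fun u hu v hv ha ↦ ?_) fun _ _ ↦ le_rfl
  grind [sup_edge_adj]

lemma potential_sup_edge {c y : V} (h : c ≠ y) (hn : ¬ G.Adj c y) (hc : c ∈ T) (hy : y ∈ T) :
    potential (G ⊔ edge c y) w T = potential G w T - 4 := by
  classical
  have hdeg (u : V) : degOn (G ⊔ edge c y) T u
      = degOn G T u + ((if u = c then 1 else 0) + if u = y then 1 else 0) := by
    rw [degOn_eq_sum, degOn_eq_sum]
    trans ∑ x ∈ T, ((if G.Adj u x then 1 else 0)
      + ((if x = y then if u = c then 1 else 0 else 0)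
        + if x = c then if u = y then 1 else 0 else 0))
    · refine sum_congr rfl fun x _ ↦ ?_
      have hn' := mt G.adj_symm hn
      simp only [sup_edge_adj h]
      split_ifs <;> grind
    · simp only [sum_add_distrib, sum_ite_eq', if_pos hc, if_pos hy]
  simp only [potential, hdeg, mul_add, sum_sub_distrib, sum_add_distrib, ← mul_sum, sum_ite_eq',
    if_pos hc, if_pos hy]
  ring

namespace IsForestOn

lemma mono (h : IsForestOn G B) (hAB : A ⊆ B) : IsForestOn G A :=
  fun S hS ↦ h S (hS.trans hAB)

lemma anti (h : IsForestOn H B) (hG : ∀ u ∈ B, ∀ v ∈ B, G.Adj u v → H.Adj u v) :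
    IsForestOn G B :=
  fun S hS hne ↦ (h S hS hne).trans_le <|
    potential_mono (fun u hu v hv ↦ hG u (hS hu) v (hS hv)) fun _ _ ↦ le_rfl

lemma singleton (v : V) : IsForestOn G {v} := by
  intro S hS hne
  rw [hne.subset_singleton_iff.1 hS, potential_singleton]
  norm_num

end IsForestOn

/-- The hypothesis of the induction: weights are at most `5` and nonempty sets have positive
potential. -/
structure Admissible (G : SimpleGraph V) (w : V → ℤ) (W : Finset V) : Prop where
  le_five : ∀ v ∈ W, w v ≤ 5
  one_le_potential : ∀ T ⊆ W, T.Nonempty → 1 ≤ potential G w T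

lemma Admissible.mono (h : Admissible G w W) (hS : S ⊆ W) : Admissible G w S :=
  ⟨fun v hv ↦ h.le_five v (hS hv), fun T hT ↦ h.one_le_potential T (hT.trans hS)⟩

lemma degOn_union [DecidableEq V] (h : Disjoint S T) (v : V) :
    degOn G (S ∪ T) v = degOn G S v + degOn G T v := by
  simp only [degOn_eq_sum, sum_union h]

lemma degOn_sdiff [DecidableEq V] (h : S ⊆ T) (v : V) :
    degOn G (T \ S) v = degOn G T v - degOn G S v := by
  rw [eq_sub_iff_add_eq, ← degOn_union sdiff_disjoint, sdiff_union_of_subset h]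

lemma potential_union [DecidableEq V] (h : Disjoint S T) : potential G w (S ∪ T) =
    potential G w S + potential G w T - 4 * ∑ v ∈ T, degOn G S v := by
  simp only [potential, sum_union h, degOn_union h, mul_add, sum_sub_distrib, sum_add_distrib,
    ← mul_sum, sum_degOn_comm (S := T)]
  ring

lemma potential_insert [DecidableEq V] {v : V} (h : v ∉ S) :
    potential G w (insert v S) = potential G w S + w v - 4 * degOn G S v := by
  rw [insert_eq, union_comm, potential_union (disjoint_singleton_right.2 h), potential_singleton,
    sum_singleton]

lemma four_dvd_potential (S : Finset V) : 4 ∣ potential G (fun _ ↦ 4) S := by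
  classical
  induction S using Finset.induction_on with
  | empty => simp [potential]
  | insert v S hv ih =>
    rw [potential_insert hv]
    exact (ih.add (dvd_refl 4)).sub (dvd_mul_right 4 _)

variable [DecidableEq V]

namespace IsForestOn

lemma union (hA : IsForestOn G A) (hB : IsForestOn G B) (hd : Disjoint A B)
    (he : ∑ b ∈ B, degOn G A b ≤ 1) : IsForestOn G (A ∪ B) := by
  intro S hS hne
  have hSAB : S = (S ∩ A) ∪ (S ∩ B) := by
    rw [← inter_union_distrib_left, inter_eq_left.2 hS]
  obtain hSA | hSA := (S ∩ A).eq_empty_or_nonempty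
  · rw [hSA, empty_union] at hSAB
    exact hB S (inter_eq_left.1 hSAB.symm) hne
  obtain hSB | hSB := (S ∩ B).eq_empty_or_nonempty
  · rw [hSB, union_empty] at hSAB
    exact hA S (inter_eq_left.1 hSAB.symm) hne
  rw [hSAB, potential_union (hd.mono inter_subset_right inter_subset_right)]
  have hcross : ∑ b ∈ S ∩ B, degOn G (S ∩ A) b ≤ 1 :=
    (sum_le_sum fun b _ ↦ degOn_mono inter_subset_right b).trans <|
      (sum_le_sum_of_subset_of_nonneg inter_subset_right fun b _ _ ↦ degOn_nonneg b).trans he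
  have hposA := hA _ inter_subset_right hSA
  have hposB := hB _ inter_subset_right hSB
  have hdvdA := four_dvd_potential (G := G) (S ∩ A)
  have hdvdB := four_dvd_potential (G := G) (S ∩ B)
  omega

lemma insert_leaf (h : IsForestOn G B) {v : V} (hv : v ∉ B) (hdeg : degOn G B v ≤ 1) :
    IsForestOn G (insert v B) := by
  rw [insert_eq, union_comm]
  exact h.union (singleton v) (disjoint_singleton_right.2 hv) (by rwa [sum_singleton])

lemma subdivide {c y v : V} (hcy : c ≠ y) (hn : ¬ G.Adj c y) (h : IsForestOn (G ⊔ edge c y) B)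
    (hnbrs : nbrs G B v ⊆ {c, y}) : IsForestOn G (insert v B) := by
  have hB : IsForestOn G B := h.anti fun _ _ _ _ ha ↦ Or.inl ha
  intro S hS hne
  have hsub : S.erase v ⊆ B := subset_insert_iff.1 hS
  have hvS := notMem_erase v S
  by_cases hcyS : c ∈ S.erase v ∧ y ∈ S.erase v
  · by_cases hmem : v ∈ S
    · rw [← insert_erase hmem, potential_insert hvS]
      have hpos := h _ hsub ⟨c, hcyS.1⟩
      rw [potential_sup_edge hcy hn hcyS.1 hcyS.2] at hpos
      have hdeg : degOn G (S.erase v) v ≤ 2 := by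
        rw [← Nat.cast_two, ← card_pair hcy]
        exact Int.ofNat_le.2 (card_le_card ((nbrs_mono hsub v).trans hnbrs))
      linarith
    · exact hB S (by rwa [erase_eq_of_notMem hmem] at hsub) hne
  · have hdeg : degOn G (S.erase v) v ≤ 1 := by
      refine degOn_le_one_iff.2 fun p hp hvp q hq hvq ↦ ?_
      have hpcy := hnbrs (mem_nbrs.2 ⟨hsub hp, hvp⟩)
      have hqcy := hnbrs (mem_nbrs.2 ⟨hsub hq, hvq⟩)
      simp only [mem_insert, mem_singleton] at hpcy hqcy
      grind
    exact (hB.mono hsub).insert_leaf hvS hdeg S (insert_erase_subset v S) hne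

end IsForestOn

/-! ### Weighted I,F-colorings -/

/-- The weighted I,F-partitions behind the induction: `I` is 2-independent inside `G[W]`, `W \ I`
spans a forest, and the weights restrict `I`. A vertex of weight at most `4` is forced into the
forest, and a vertex of weight at most `2` moreover has no neighbour in `I`. -/
structure IsIFColoring (G : SimpleGraph V) (w : V → ℤ) (W I : Finset V) : Prop where
  subset : I ⊆ W
  five_le : ∀ v ∈ I, 5 ≤ w v
  three_le : ∀ v ∈ I, ∀ u ∈ W, G.Adj v u → 3 ≤ w u
  not_adj : ∀ u ∈ I, ∀ v ∈ I, ¬ G.Adj u v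
  eq_of_adj : ∀ x ∈ W, ∀ u ∈ I, ∀ v ∈ I, G.Adj x u → G.Adj x v → u = v
  isForestOn : IsForestOn G (W \ I)

/-- The vertex `v` may become a neighbour of a new vertex of `I`. -/
structure IsClear (G : SimpleGraph V) (w : V → ℤ) (I : Finset V) (v : V) : Prop where
  notMem : v ∉ I
  three_le : 3 ≤ w v
  not_adj : ∀ q ∈ I, ¬ G.Adj v q

namespace IsIFColoring

variable {X Y I J : Finset V} {v x : V}

lemma anti (h : IsIFColoring H w W I) (hG : ∀ u ∈ W, ∀ v ∈ W, G.Adj u v → H.Adj u v)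
    (hw : ∀ v ∈ W, w v ≤ w' v) : IsIFColoring G w' W I where
  subset := h.subset
  five_le v hv := (h.five_le v hv).trans (hw v (h.subset hv))
  three_le v hv u hu ha := (h.three_le v hv u hu (hG v (h.subset hv) u hu ha)).trans (hw u hu)
  not_adj u hu v hv ha := h.not_adj u hu v hv (hG u (h.subset hu) v (h.subset hv) ha)
  eq_of_adj x hx u hu v hv hxu hxv := h.eq_of_adj x hx u hu v hv
    (hG x hx u (h.subset hu) hxu) (hG x hx v (h.subset hv) hxv)
  isForestOn := h.isForestOn.anti fun u hu v hv ↦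
    hG u (sdiff_subset hu) v (sdiff_subset hv)

lemma restrict (h : IsIFColoring G w W I) (hX : X ⊆ W) : IsIFColoring G w X (I ∩ X) where
  subset := inter_subset_right
  five_le v hv := h.five_le v (inter_subset_left hv)
  three_le v hv u hu := h.three_le v (inter_subset_left hv) u (hX hu)
  not_adj u hu v hv := h.not_adj u (inter_subset_left hu) v (inter_subset_left hv)
  eq_of_adj x hx u hu v hv :=
    h.eq_of_adj x (hX hx) u (inter_subset_left hu) v (inter_subset_left hv)
  isForestOn := h.isForestOn.mono <| by
    rw [sdiff_inter_self_right]
    exact sdiff_subset_sdiff hX le_rfl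

lemma isClear_of_adj (h : IsIFColoring H w W I) (hG : G ≤ H) (hx : x ∈ W) (hv : v ∈ I)
    (hxv : H.Adj x v) : IsClear G w (I ∩ W.erase v) x where
  notMem hxI := h.not_adj x (inter_subset_left hxI) v hv hxv
  three_le := h.three_le v hv x hx hxv.symm
  not_adj q hq hxq := by
    obtain ⟨hqI, hqW⟩ := mem_inter.1 hq
    exact ne_of_mem_erase hqW (h.eq_of_adj x hx q hqI v hv (hG hxq) hxv)

lemma union (hX : IsIFColoring G w X I) (hY : IsIFColoring G w Y J)
    (hI : ∀ v ∈ I, ∀ y ∈ Y, G.Adj v y → y ∉ J ∧ 3 ≤ w y ∧ ∀ u ∈ I ∪ J, G.Adj y u → u = v)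
    (hJ : ∀ v ∈ J, ∀ x ∈ X, G.Adj v x → x ∉ I ∧ 3 ≤ w x ∧ ∀ u ∈ I ∪ J, G.Adj x u → u = v)
    (hforest : IsForestOn G ((X ∪ Y) \ (I ∪ J))) : IsIFColoring G w (X ∪ Y) (I ∪ J) where
  subset := union_subset_union hX.subset hY.subset
  five_le v hv := (mem_union.1 hv).elim (hX.five_le v) (hY.five_le v)
  three_le v hv u hu ha := by
    rcases mem_union.1 hv with hv | hv <;> rcases mem_union.1 hu with hu | hu
    · exact hX.three_le v hv u hu ha
    · exact (hI v hv u hu ha).2.1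
    · exact (hJ v hv u hu ha).2.1
    · exact hY.three_le v hv u hu ha
  not_adj u hu v hv ha := by
    rcases mem_union.1 hu with hu | hu <;> rcases mem_union.1 hv with hv | hv
    · exact hX.not_adj u hu v hv ha
    · exact (hI u hu v (hY.subset hv) ha).1 hv
    · exact (hJ u hu v (hX.subset hv) ha).1 hv
    · exact hY.not_adj u hu v hv ha
  eq_of_adj x hx u hu v hv hxu hxv := by
    rcases mem_union.1 hx with hx | hx
    · rcases mem_union.1 hu with huI | huJ
      · rcases mem_union.1 hv with hvI | hvJ
        · exact hX.eq_of_adj x hx u huI v hvI hxu hxv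
        · exact (hJ v hvJ x hx hxv.symm).2.2 u hu hxu
      · exact ((hJ u huJ x hx hxu.symm).2.2 v hv hxv).symm
    · rcases mem_union.1 hu with huI | huJ
      · exact ((hI u huI x hx hxu.symm).2.2 v hv hxv).symm
      · rcases mem_union.1 hv with hvI | hvJ
        · exact (hI v hvI x hx hxv.symm).2.2 u hu hxu
        · exact hY.eq_of_adj x hx u huJ v hvJ hxu hxv
  isForestOn := hforest

lemma union_of_sum_degOn_le_one (hX : IsIFColoring G w X I) (hY : IsIFColoring G w Y J)
    (hd : Disjoint X Y) (hsum : ∑ y ∈ Y, degOn G X y ≤ 1)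
    (hI : ∀ v ∈ I, ∀ y ∈ Y, G.Adj v y → IsClear G w J y)
    (hJ : ∀ v ∈ J, ∀ x ∈ X, G.Adj v x → IsClear G w I x) :
    IsIFColoring G w (X ∪ Y) (I ∪ J) := by
  have hdegY : ∀ y ∈ Y, degOn G X y ≤ 1 := fun y hy ↦
    (single_le_sum (fun z _ ↦ degOn_nonneg z) hy).trans hsum
  have hdegX : ∀ x ∈ X, degOn G Y x ≤ 1 := fun x hx ↦
    (single_le_sum (fun z _ ↦ degOn_nonneg z) hx).trans (sum_degOn_comm.symm.trans_le hsum)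
  refine hX.union hY (fun v hv y hy hvy ↦ ?_) (fun v hv x hx hvx ↦ ?_) ?_
  · obtain ⟨hyJ, hwy, hclean⟩ := hI v hv y hy hvy
    refine ⟨hyJ, hwy, fun u hu hyu ↦ ?_⟩
    exact degOn_le_one_iff.1 (hdegY y hy) u
      (hX.subset ((mem_union.1 hu).resolve_right fun huJ ↦ hclean u huJ hyu)) hyu v
      (hX.subset hv) hvy.symm
  · obtain ⟨hxI, hwx, hclean⟩ := hJ v hv x hx hvx
    refine ⟨hxI, hwx, fun u hu hxu ↦ ?_⟩
    exact degOn_le_one_iff.1 (hdegX x hx) u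
      (hY.subset ((mem_union.1 hu).resolve_left fun huI ↦ hclean u huI hxu)) hxu v
      (hY.subset hv) hvx.symm
  · have hsum' : ∑ y ∈ Y \ J, degOn G (X \ I) y ≤ 1 :=
      (sum_le_sum fun y _ ↦ degOn_mono sdiff_subset y).trans <|
        (sum_le_sum_of_subset_of_nonneg sdiff_subset fun y _ _ ↦ degOn_nonneg y).trans hsum
    refine (hX.isForestOn.union hY.isForestOn (hd.mono sdiff_subset sdiff_subset) hsum').mono ?_
    grind

lemma insert_forest (h : IsIFColoring G w W I) (hv : v ∉ W)
    (hforest : IsForestOn G (insert v (W \ I))) (hI : degOn G I v ≤ 1)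
    (hw : ∀ p ∈ I, G.Adj v p → 3 ≤ w v) : IsIFColoring G w (insert v W) I := by
  have hv' : IsIFColoring G w {v} ∅ :=
    ⟨by simp, by simp, by simp, by simp, by simp, by simpa using IsForestOn.singleton v⟩
  have hvI : v ∉ I := fun hvI ↦ hv (h.subset hvI)
  rw [← union_empty I, insert_eq, union_comm]
  refine h.union hv' (fun p hp y hy hpy ↦ ?_) (by simp) ?_
  · obtain rfl := mem_singleton.1 hy
    rw [union_empty]
    exact ⟨notMem_empty _, hw p hp hpy.symm,
      fun u hu hyu ↦ degOn_le_one_iff.1 hI u hu hyu p hp hpy.symm⟩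
  · rw [union_empty, union_comm, ← insert_eq, insert_sdiff_of_notMem _ hvI]
    exact hforest

lemma insert_leaf (h : IsIFColoring G w W I) (hv : v ∉ W) (hw : 3 ≤ w v)
    (hdeg : degOn G W v ≤ 1) : IsIFColoring G w (insert v W) I :=
  h.insert_forest hv
    (h.isForestOn.insert_leaf (by simp [hv]) ((degOn_mono sdiff_subset v).trans hdeg))
    ((degOn_mono h.subset v).trans hdeg) fun _ _ _ ↦ hw

lemma insert_indep (h : IsIFColoring G w W I) (hv : v ∉ W) (hw : 5 ≤ w v)
    (hnbr : ∀ p ∈ W, G.Adj v p → IsClear G w I p) :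
    IsIFColoring G w (insert v W) (insert v I) := by
  have hv' : IsIFColoring G w {v} {v} :=
    ⟨by simp, by simpa, by simp, by simp, by simp, by simp [IsForestOn]⟩
  rw [insert_eq, insert_eq, union_comm, union_comm {v}]
  refine h.union hv' (fun p hp y hy hpy ↦ ?_) (fun y hy p hp hyp ↦ ?_) (h.isForestOn.mono ?_)
  · obtain rfl := mem_singleton.1 hy
    exact absurd hp (hnbr p (h.subset hp) hpy.symm).1
  · obtain rfl := mem_singleton.1 hy
    obtain ⟨hpI, hwp, hclean⟩ := hnbr p hp hyp
    refine ⟨hpI, hwp, fun u hu hpu ↦ ?_⟩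
    exact mem_singleton.1 ((mem_union.1 hu).resolve_left fun huI ↦ hclean u huI hpu)
  · grind

lemma union_leaves (h : IsIFColoring G w W I) {L : Finset V} (hd : Disjoint W L)
    (hw : ∀ l ∈ L, 3 ≤ w l) (hdeg : ∀ l ∈ L, degOn G (W ∪ L) l ≤ 1) :
    IsIFColoring G w (W ∪ L) I := by
  induction L using Finset.induction_on with
  | empty => rwa [union_empty]
  | insert l L hl ih =>
    rw [disjoint_insert_right] at hd
    have hsub : W ∪ L ⊆ W ∪ insert l L := union_subset_union_right (subset_insert l L)
    rw [union_insert]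
    refine (ih hd.2 (fun m hm ↦ hw m (mem_insert_of_mem hm)) fun m hm ↦
      (degOn_mono hsub m).trans (hdeg m (mem_insert_of_mem hm))).insert_leaf ?_ ?_ ?_
    · simp [hd.1, hl]
    · exact hw l (mem_insert_self l L)
    · exact (degOn_mono hsub l).trans (hdeg l (mem_insert_self l L))

lemma subdivide {c y : V} (hcy : c ≠ y) (hn : ¬ G.Adj c y)
    (h : IsIFColoring (G ⊔ edge c y) w W I) (hv : v ∉ W) (hw : 3 ≤ w v)
    (hnbrs : nbrs G W v ⊆ {c, y}) : IsIFColoring G w (insert v W) I := by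
  have hG : IsIFColoring G w W I := h.anti (fun _ _ _ _ ha ↦ Or.inl ha) fun _ _ ↦ le_rfl
  have hmem : ∀ p ∈ W, G.Adj v p → p = c ∨ p = y := fun p hp hvp ↦ by
    simpa using hnbrs (mem_nbrs.2 ⟨hp, hvp⟩)
  have hnot : c ∈ I → y ∉ I := fun hc hy ↦
    h.not_adj c hc y hy ((sup_edge_adj hcy).2 (Or.inr (Or.inl ⟨rfl, rfl⟩)))
  refine hG.insert_forest hv ?_ (degOn_le_one_iff.2 fun p hp hvp q hq hvq ↦ ?_) fun _ _ _ ↦ hw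
  · by_cases hI : c ∈ I ∨ y ∈ I
    · refine h.isForestOn.anti (fun _ _ _ _ ha ↦ Or.inl ha) |>.insert_leaf (by simp [hv]) <|
        degOn_le_one_iff.2 fun p hp hvp q hq hvq ↦ ?_
      have := hmem p (sdiff_subset hp) hvp
      have := hmem q (sdiff_subset hq) hvq
      grind
    · exact h.isForestOn.subdivide hcy hn ((nbrs_mono sdiff_subset v).trans hnbrs)
  · have := hmem p (h.subset hp) hvp
    have := hmem q (h.subset hq) hvq
    grind

end IsIFColoring

/-! ### Minimal counterexamples and their cuts -/

/-- The weight `w` truncated at `k` on the set `P`. -/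
def cap (w : V → ℤ) (P : Finset V) (k : ℤ) (v : V) : ℤ := if v ∈ P then min (w v) k else w v

section cap

variable {P : Finset V} {k : ℤ} {v : V}

lemma cap_le : cap w P k v ≤ w v := by
  unfold cap
  split_ifs
  exacts [min_le_left _ _, le_rfl]

lemma cap_le_of_mem (hv : v ∈ P) : cap w P k v ≤ k := by
  rw [cap, if_pos hv]
  exact min_le_right _ _

lemma le_potential_cap (hw : ∀ v ∈ T, w v ≤ 5) (hk : k ≤ 5) :
    potential G w T - (5 - k) * #(T ∩ P) ≤ potential G (cap w P k) T := by
  have hsum : (5 - k) * #(T ∩ P) = ∑ v ∈ T, if v ∈ P then 5 - k else 0 := by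
    rw [sum_ite_mem, sum_const, nsmul_eq_mul, mul_comm]
  rw [hsum, potential, potential, ← sum_sub_distrib]
  refine sum_le_sum fun v hv ↦ ?_
  have := hw v hv
  unfold cap
  split_ifs <;> grind

namespace IsIFColoring

variable {I : Finset V}

lemma of_cap (h : IsIFColoring G (cap w P k) W I) : IsIFColoring G w W I :=
  h.anti (fun _ _ _ _ ↦ id) fun _ _ ↦ cap_le

lemma notMem_of_cap (h : IsIFColoring G (cap w P k) W I) (hk : k ≤ 4) (hv : v ∈ P) : v ∉ I :=
  fun hvI ↦ by linarith [h.five_le v hvI, cap_le_of_mem (w := w) (k := k) hv]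

lemma not_adj_of_cap (h : IsIFColoring G (cap w P k) W I) (hk : k ≤ 2) (hv : v ∈ P)
    (hvW : v ∈ W) : ∀ u ∈ I, ¬ G.Adj v u :=
  fun u hu ha ↦ by linarith [h.three_le u hu v hvW ha.symm, cap_le_of_mem (w := w) (k := k) hv]

end IsIFColoring

end cap

lemma Admissible.cap {P : Finset V} {k : ℤ} (hw : ∀ v ∈ W, w v ≤ 5) (hk : k ≤ 5)
    (hpot : ∀ T ⊆ W, T.Nonempty → 1 + (5 - k) * #(T ∩ P) ≤ potential G w T) :
    Admissible G (cap w P k) W where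
  le_five v hv := cap_le.trans (hw v hv)
  one_le_potential T hT hne := by
    linarith [hpot T hT hne, le_potential_cap (G := G) (P := P) (fun v hv ↦ hw v (hT hv)) hk]

lemma left_ssubset_union {X Y : Finset V} (hd : Disjoint X Y) (hY : Y.Nonempty) : X ⊂ X ∪ Y :=
  left_lt_sup.2 fun hYX ↦ hY.ne_empty (disjoint_self.1 (hd.mono_left hYX))

lemma right_ssubset_union {X Y : Finset V} (hd : Disjoint X Y) (hX : X.Nonempty) : Y ⊂ X ∪ Y :=
  right_lt_sup.2 fun hXY ↦ hX.ne_empty (disjoint_self.1 (hd.mono_right hXY))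

/-- The vertices of `X` with a neighbour in `Y`. -/
noncomputable def boundary (G : SimpleGraph V) (X Y : Finset V) : Finset V :=
  Y.biUnion (nbrs G X)

lemma mem_boundary {X Y : Finset V} {x : V} :
    x ∈ boundary G X Y ↔ x ∈ X ∧ ∃ y ∈ Y, G.Adj x y := by
  simp only [boundary, mem_biUnion, mem_nbrs, G.adj_comm x]
  grind

lemma card_boundary_le (X Y : Finset V) : (#(boundary G X Y) : ℤ) ≤ ∑ y ∈ Y, degOn G X y := by
  simp only [degOn]
  exact_mod_cast card_biUnion_le

/-- A minimal counterexample to: every admissible weighted graph has an I,F-coloring. -/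
structure MinimalCounterexample (G : SimpleGraph V) (w : V → ℤ) (W : Finset V) : Prop where
  admissible : Admissible G w W
  not_coloring : ∀ I, ¬ IsIFColoring G w W I
  exists_coloring : ∀ (G' : SimpleGraph V) (w' : V → ℤ) (W' : Finset V), #W' < #W →
    Admissible G' w' W' → ∃ I, IsIFColoring G' w' W' I

namespace MinimalCounterexample

variable {X Y : Finset V}

lemma exists_coloring_of_ssubset (h : MinimalCounterexample G w W) (hX : X ⊂ W)
    (hadm : Admissible H w' X) : ∃ I, IsIFColoring H w' X I :=
  h.exists_coloring H w' X (card_lt_card hX) hadm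

lemma two_le_card (h : MinimalCounterexample G w W) : 2 ≤ #W := by
  by_contra! hlt
  refine h.not_coloring ∅ ⟨by simp, by simp, by simp, by simp, by simp, ?_⟩
  rw [sdiff_empty]
  obtain rfl | hne := W.eq_empty_or_nonempty
  · exact fun S hS hS' ↦ absurd (subset_empty.1 hS) hS'.ne_empty
  · obtain ⟨v, rfl⟩ := card_eq_one.1 (by have := hne.card_pos; omega : #W = 1)
    exact .singleton v

lemma false_of_four_le_potential (h : MinimalCounterexample G w (X ∪ Y)) (hd : Disjoint X Y)
    (hX : X.Nonempty) (hY : Y.Nonempty) (hsum : ∑ y ∈ Y, degOn G X y ≤ 1)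
    (hpot : ∀ T ⊆ Y, (T ∩ boundary G Y X).Nonempty → 4 ≤ potential G w T) : False := by
  have hcard : #(boundary G Y X) ≤ 1 := by
    exact_mod_cast (card_boundary_le Y X).trans (sum_degOn_comm.symm.trans_le hsum)
  obtain ⟨I, hI⟩ := h.exists_coloring_of_ssubset (left_ssubset_union hd hY)
    (h.admissible.mono subset_union_left)
  obtain ⟨J, hJ⟩ := h.exists_coloring_of_ssubset (right_ssubset_union hd hX)
    (.cap (P := boundary G Y X) (k := 2)
      (h.admissible.mono subset_union_right).le_five (by norm_num) fun T hT hne ↦ by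
        obtain hT' | hT' := (T ∩ boundary G Y X).eq_empty_or_nonempty
        · simpa [hT'] using h.admissible.one_le_potential T (hT.trans subset_union_right) hne
        · have : #(T ∩ boundary G Y X) ≤ 1 := (card_le_card inter_subset_right).trans hcard
          have := hpot T hT hT'
          push_cast
          omega)
  have hmem : ∀ x ∈ X, ∀ y ∈ Y, G.Adj x y → y ∈ boundary G Y X :=
    fun x hx y hy hxy ↦ mem_boundary.2 ⟨hy, x, hx, hxy.symm⟩
  refine h.not_coloring _ (hI.union_of_sum_degOn_le_one hJ.of_cap hd hsum
    (fun v hv y hy hvy ↦ ?_) fun v hv x hx hvx ↦ ?_)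
  · have hyP := hmem v (hI.subset hv) y hy hvy
    refine ⟨hJ.notMem_of_cap (by norm_num) hyP, ?_, hJ.not_adj_of_cap le_rfl hyP hy⟩
    have := hpot {y} (singleton_subset_iff.2 hy) ⟨y, by simp [hyP]⟩
    rw [potential_singleton] at this
    linarith
  · exact absurd hv (hJ.notMem_of_cap (by norm_num) (hmem x hx v (hJ.subset hv) hvx.symm))

lemma cap_four (h : MinimalCounterexample G w W) {P : Finset V} (hX : X ⊂ W) (hP : #P ≤ 1)
    (hpot : ∀ T ⊆ X, (T ∩ P).Nonempty → 2 ≤ potential G w T) :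
    ∃ I, IsIFColoring G (cap w P 4) X I := by
  refine h.exists_coloring_of_ssubset hX <|
    .cap (h.admissible.mono hX.subset).le_five (by norm_num) fun T hT hne ↦ ?_
  obtain hT' | hT' := (T ∩ P).eq_empty_or_nonempty
  · simpa [hT'] using h.admissible.one_le_potential T (hT.trans hX.subset) hne
  · have : #(T ∩ P) ≤ 1 := (card_le_card inter_subset_right).trans hP
    have := hpot T hT hT'
    push_cast
    omega

lemma five_le_potential_add (h : MinimalCounterexample G w (X ∪ Y)) (hd : Disjoint X Y)
    (hP : #(boundary G Y X) ≤ 1) (hA : A ⊆ X) (hA' : (A ∩ boundary G X Y).Nonempty) (hB : B ⊆ Y)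
    (hB' : (B ∩ boundary G Y X).Nonempty) : 5 ≤ potential G w A + potential G w B := by
  obtain ⟨x, hx⟩ := hA'
  obtain ⟨hxA, hxP⟩ := mem_inter.1 hx
  obtain ⟨hxX, y, hy, hxy⟩ := mem_boundary.1 hxP
  obtain ⟨b, hb⟩ := hB'
  obtain ⟨hbB, hbP⟩ := mem_inter.1 hb
  obtain rfl : b = y := card_le_one.1 hP b hbP y (mem_boundary.2 ⟨hy, x, hxX, hxy.symm⟩)
  have hpos := h.admissible.one_le_potential (A ∪ B) (union_subset_union hA hB)
    ⟨x, mem_union_left B hxA⟩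
  have hedge : 1 ≤ ∑ v ∈ B, degOn G A v :=
    (one_le_degOn_iff.2 ⟨x, hxA, hxy.symm⟩).trans <|
      single_le_sum (fun v _ ↦ degOn_nonneg v) hbB
  rw [potential_union (hd.mono hA hB)] at hpos
  linarith

lemma two_le_sum_degOn (h : MinimalCounterexample G w (X ∪ Y)) (hd : Disjoint X Y)
    (hX : X.Nonempty) (hY : Y.Nonempty) : 2 ≤ ∑ y ∈ Y, degOn G X y := by
  by_contra! hlt
  have hsum : ∑ y ∈ Y, degOn G X y ≤ 1 := by omega
  have hsum' : ∑ x ∈ X, degOn G Y x ≤ 1 := sum_degOn_comm.symm.trans_le hsum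
  have hPY : #(boundary G Y X) ≤ 1 := by exact_mod_cast (card_boundary_le Y X).trans hsum'
  have hPX : #(boundary G X Y) ≤ 1 := by exact_mod_cast (card_boundary_le X Y).trans hsum
  by_cases hA : ∀ A ⊆ X, (A ∩ boundary G X Y).Nonempty → 2 ≤ potential G w A
  · by_cases hB : ∀ B ⊆ Y, (B ∩ boundary G Y X).Nonempty → 2 ≤ potential G w B
    · obtain ⟨I, hI⟩ := h.cap_four (left_ssubset_union hd hY) hPX hA
      obtain ⟨J, hJ⟩ := h.cap_four (right_ssubset_union hd hX) hPY hB
      refine h.not_coloring _ (hI.of_cap.union_of_sum_degOn_le_one hJ.of_cap hd hsum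
        (fun v hv y hy hvy ↦ ?_) fun v hv x hx hvx ↦ ?_)
      · exact absurd hv <| hI.notMem_of_cap le_rfl <|
          mem_boundary.2 ⟨hI.subset hv, y, hy, hvy⟩
      · exact absurd hv <| hJ.notMem_of_cap le_rfl <|
          mem_boundary.2 ⟨hJ.subset hv, x, hx, hvx⟩
    · push Not at hB
      obtain ⟨B, hBY, hBP, hB⟩ := hB
      refine (union_comm X Y ▸ h).false_of_four_le_potential hd.symm hY hX hsum' fun A hAX hAP ↦ ?_
      linarith [h.five_le_potential_add hd hPY hAX hAP hBY hBP]
  · push Not at hA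
    obtain ⟨A, hAX, hAP, hA⟩ := hA
    refine h.false_of_four_le_potential hd hX hY hsum fun B hBY hBP ↦ ?_
    linarith [h.five_le_potential_add hd hPY hAX hAP hBY hBP]

lemma two_le_degOn (h : MinimalCounterexample G w W) {v : V} (hv : v ∈ W) : 2 ≤ degOn G W v := by
  have hW : {v} ∪ W.erase v = W := by rw [← insert_eq, insert_erase hv]
  have hne : (W.erase v).Nonempty := by
    rw [← card_pos, card_erase_of_mem hv]
    have := h.two_le_card
    omega
  have hcut := (hW.symm ▸ h).two_le_sum_degOn (disjoint_singleton_left.2 (notMem_erase v W))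
    (singleton_nonempty v) hne
  rw [sum_degOn_comm, sum_singleton] at hcut
  exact hcut.trans (degOn_mono (erase_subset v W) v)

end MinimalCounterexample

/-! ### Contracting a tight set -/

/-- The graph obtained from `G` by deleting `S` except for the single vertex `d ∈ S`, which is
joined to every outside vertex that has a neighbour in `A`. -/
def contract (G : SimpleGraph V) (S A : Finset V) (d : V) : SimpleGraph V :=
  .fromRel fun u v ↦ u ∉ S ∧ (v ∉ S ∧ G.Adj u v ∨ v = d ∧ ∃ s ∈ A, G.Adj u s)

/-- The weight matching `contract G S (S \ I) d` for an I,F-coloring `I` of `S`: the weight is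
`2` at `d`, and is truncated at `2` on the outside neighbours of `I`. -/
noncomputable def contractWeight (G : SimpleGraph V) (w : V → ℤ) (W S I : Finset V) (d : V) :
    V → ℤ :=
  Function.update (cap w (boundary G (W \ S) I) 2) d 2

section contract

variable {I J Q : Finset V} {d u v : V}

omit [DecidableEq V] in
lemma contract_adj (hd : d ∈ S) (hu : u ∉ S) (hv : v ∉ S) :
    (contract G S A d).Adj u v ↔ G.Adj u v := by
  have := G.adj_comm u v
  have := G.irrefl (v := u)
  rw [contract, fromRel_adj]
  grind

omit [DecidableEq V] in
lemma contract_adj_left (hd : d ∈ S) (hv : v ∉ S) :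
    (contract G S A d).Adj d v ↔ ∃ s ∈ A, G.Adj v s := by
  rw [contract, fromRel_adj]
  grind

omit [DecidableEq V] in
lemma degOn_contract (hd : d ∈ S) (hQ : Disjoint S Q) (hA : ∀ x ∈ Q, degOn G A x ≤ 1) :
    degOn (contract G S A d) Q d = ∑ x ∈ Q, degOn G A x := by
  classical
  rw [degOn_eq_sum]
  refine sum_congr rfl fun x hx ↦ ?_
  rw [contract_adj_left hd (disjoint_right.1 hQ hx), ← one_le_degOn_iff]
  have := hA x hx
  have := degOn_nonneg (G := G) (S := A) x
  split_ifs <;> omega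

omit [DecidableEq V] in
lemma potential_le_potential_contract (hd : d ∈ S) (hQ : Disjoint S Q) :
    potential G w Q ≤ potential (contract G S A d) w Q :=
  potential_mono (fun _ hu _ hv ↦
    (contract_adj hd (disjoint_right.1 hQ hu) (disjoint_right.1 hQ hv)).1) fun _ _ ↦ le_rfl

lemma IsForestOn.of_contract (hA : IsForestOn G A) (hB : IsForestOn (contract G S A d) (insert d B))
    (hd : d ∈ S) (hSB : Disjoint S B) (hAS : A ⊆ S) (hdeg : ∀ b ∈ B, degOn G A b ≤ 1) :
    IsForestOn G (A ∪ B) := by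
  have hB' : IsForestOn G B := (hB.mono (subset_insert d B)).anti fun u hu v hv ↦
    (contract_adj hd (disjoint_right.1 hSB hu) (disjoint_right.1 hSB hv)).2
  intro R hR hne
  have hRAB : R = (R ∩ A) ∪ (R ∩ B) := by
    rw [← inter_union_distrib_left, inter_eq_left.2 hR]
  obtain hRA | hRA := (R ∩ A).eq_empty_or_nonempty
  · rw [hRA, empty_union] at hRAB
    exact hB' R (inter_eq_left.1 hRAB.symm) hne
  have hRB : Disjoint S (R ∩ B) := hSB.mono_right inter_subset_right
  have hposA := hA _ inter_subset_right hRA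
  have hdvdA := four_dvd_potential (G := G) (R ∩ A)
  have hposB := hB _ (insert_subset_insert d (inter_subset_right (s₁ := R))) (insert_nonempty d _)
  rw [potential_insert (disjoint_left.1 hRB hd),
    degOn_contract hd hRB fun x hx ↦ hdeg x (inter_subset_right hx)] at hposB
  have hcontract : potential (contract G S A d) (fun _ ↦ 4) (R ∩ B)
      ≤ potential G (fun _ ↦ 4) (R ∩ B) :=
    potential_mono (fun u hu v hv ↦
      (contract_adj hd (disjoint_right.1 hRB hu) (disjoint_right.1 hRB hv)).2) fun _ _ ↦ le_rfl
  have hcross : ∑ b ∈ R ∩ B, degOn G (R ∩ A) b ≤ ∑ b ∈ R ∩ B, degOn G A b :=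
    sum_le_sum fun b _ ↦ degOn_mono inter_subset_right b
  rw [hRAB, potential_union (hRB.mono_left (inter_subset_right.trans hAS))]
  omega

lemma contractWeight_self : contractWeight G w W S I d d = 2 := Function.update_self ..

lemma contractWeight_of_notMem (hd : d ∈ S) (hv : v ∉ S) :
    contractWeight G w W S I d v = cap w (boundary G (W \ S) I) 2 v :=
  Function.update_of_ne (ne_of_mem_of_not_mem hd hv).symm ..

lemma le_potential_contractWeight (hw : ∀ v ∈ W, w v ≤ 5) (hd : d ∈ S) (hQ : Q ⊆ W \ S) :
    potential G w Q - 3 * ∑ x ∈ Q, degOn G I x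
      ≤ potential (contract G S (S \ I) d) (contractWeight G w W S I d) Q := by
  have hsub : Q ∩ boundary G (W \ S) I ⊆ boundary G Q I := fun x hx ↦
    mem_boundary.2 ⟨inter_subset_left hx, (mem_boundary.1 (inter_subset_right hx)).2⟩
  have hcard : (#(Q ∩ boundary G (W \ S) I) : ℤ) ≤ ∑ x ∈ Q, degOn G I x := by
    rw [sum_degOn_comm]
    exact (Int.ofNat_le.2 (card_le_card hsub)).trans (card_boundary_le Q I)
  have hcap := le_potential_cap (G := G) (P := boundary G (W \ S) I) (k := 2)
    (fun v hv ↦ hw v (sdiff_subset (hQ hv))) (by norm_num)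
  have hweight : potential G (cap w (boundary G (W \ S) I) 2) Q
      ≤ potential G (contractWeight G w W S I d) Q :=
    potential_mono (fun _ _ _ _ ↦ id) fun v hv ↦
      (contractWeight_of_notMem hd (mem_sdiff.1 (hQ hv)).2).ge
  have hcontract := potential_le_potential_contract (G := G) (A := S \ I)
    (w := contractWeight G w W S I d) hd (disjoint_sdiff.mono_right hQ)
  linarith

lemma contractWeight_le (hd : d ∈ S) (hv : v ∉ S) : contractWeight G w W S I d v ≤ w v :=
  (contractWeight_of_notMem hd hv).trans_le cap_le

lemma contractWeight_le_two (hd : d ∈ S) (hv : v ∈ W \ S) (hI : ∃ i ∈ I, G.Adj v i) :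
    contractWeight G w W S I d v ≤ 2 :=
  (contractWeight_of_notMem hd (mem_sdiff.1 hv).2).trans_le <|
    cap_le_of_mem (mem_boundary.2 ⟨hv, hI⟩)

namespace IsIFColoring

lemma subset_of_contract
    (hJ : IsIFColoring (contract G S A d) (contractWeight G w W S I d) (insert d (W \ S)) J) :
    J ⊆ W \ S := by
  refine (subset_insert_iff_of_notMem fun hdJ ↦ ?_).1 hJ.subset
  have := hJ.five_le d hdJ
  rw [contractWeight_self] at this
  omega

lemma sdiff_of_contract
    (hJ : IsIFColoring (contract G S A d) (contractWeight G w W S I d) (insert d (W \ S)) J)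
    (hd : d ∈ S) : IsIFColoring G w (W \ S) J := by
  have hnot : ∀ v ∈ W \ S, v ∉ S := fun v hv ↦ (mem_sdiff.1 hv).2
  rw [← inter_eq_left.2 hJ.subset_of_contract]
  exact (hJ.restrict (subset_insert d _)).anti
    (fun u hu v hv ↦ (contract_adj hd (hnot u hu) (hnot v hv)).2)
    fun v hv ↦ contractWeight_le hd (hnot v hv)

lemma not_adj_of_contract
    (hJ : IsIFColoring (contract G S (S \ I) d) (contractWeight G w W S I d) (insert d (W \ S)) J)
    (hd : d ∈ S) (hv : v ∈ J) (hu : u ∈ S) : ¬ G.Adj v u := fun hvu ↦ by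
  have hvS := hJ.subset_of_contract hv
  by_cases huI : u ∈ I
  · linarith [hJ.five_le v hv, contractWeight_le_two (w := w) hd hvS ⟨u, huI, hvu⟩]
  · have hdv := (contract_adj_left hd (mem_sdiff.1 hvS).2).2 ⟨u, mem_sdiff.2 ⟨hu, huI⟩, hvu⟩
    have := hJ.three_le v hv d (mem_insert_self d _) hdv.symm
    rw [contractWeight_self] at this
    omega

lemma of_contract (hI : IsIFColoring G w S I)
    (hJ : IsIFColoring (contract G S (S \ I) d) (contractWeight G w W S I d) (insert d (W \ S)) J)
    (hd : d ∈ S) (hSW : S ⊆ W) (hdeg : ∀ x ∈ W \ S, degOn G S x ≤ 1)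
    (hw : ∀ x ∈ W \ S, 1 ≤ degOn G S x → 3 ≤ w x) : IsIFColoring G w W (I ∪ J) := by
  have hJS := hJ.subset_of_contract
  rw [← union_sdiff_of_subset hSW]
  refine hI.union (hJ.sdiff_of_contract hd) (fun v hv y hy hvy ↦ ?_)
    (fun v hv x hx hvx ↦ absurd hvx (hJ.not_adj_of_contract hd hv hx)) ?_
  · have hy2 := contractWeight_le_two (w := w) hd hy ⟨v, hv, hvy.symm⟩
    refine ⟨fun hyJ ↦ by linarith [hJ.five_le y hyJ],
      hw y hy (one_le_degOn_iff.2 ⟨v, hI.subset hv, hvy.symm⟩), fun u hu hyu ↦ ?_⟩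
    obtain huI | huJ := mem_union.1 hu
    · exact degOn_le_one_iff.1 (hdeg y hy) u (hI.subset huI) hyu v (hI.subset hv) hvy.symm
    · have := hJ.three_le u huJ y (mem_insert_of_mem hy)
        ((contract_adj hd (mem_sdiff.1 (hJS huJ)).2 (mem_sdiff.1 hy).2).2 hyu.symm)
      omega
  · have hJF := hJ.isForestOn
    rw [insert_sdiff_of_notMem _ fun hdJ ↦ (mem_sdiff.1 (hJS hdJ)).2 hd] at hJF
    refine (hI.isForestOn.of_contract hJF hd (disjoint_sdiff.mono_right sdiff_subset) sdiff_subset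
      fun b hb ↦ (degOn_mono sdiff_subset b).trans (hdeg b (sdiff_subset hb))).mono ?_
    grind

end IsIFColoring

end contract

/-- A proper subset of `W` with at least two vertices and potential at most `2`, inclusion-maximal
as such. -/
structure IsMaximalTight (G : SimpleGraph V) (w : V → ℤ) (W S : Finset V) : Prop where
  ssubset : S ⊂ W
  two_le_card : 2 ≤ #S
  potential_le_two : potential G w S ≤ 2
  three_le_potential : ∀ T, S ⊂ T → T ⊂ W → 3 ≤ potential G w T

omit [DecidableEq V] in
lemma exists_isMaximalTight (hS : S ⊂ W) (hcard : 2 ≤ #S) (hpot : potential G w S ≤ 2) :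
    ∃ T, IsMaximalTight G w W T := by
  classical
  obtain ⟨T, hT⟩ := (W.ssubsets.filter fun T ↦ 2 ≤ #T ∧ potential G w T ≤ 2).exists_maximal
    ⟨S, by simp [hS, hcard, hpot]⟩
  have hmem := hT.prop
  simp only [mem_filter, mem_ssubsets] at hmem
  refine ⟨T, hmem.1, hmem.2.1, hmem.2.2, fun U hTU hU ↦ ?_⟩
  by_contra! hlt
  refine hT.not_gt ?_ hTU
  simp only [mem_filter, mem_ssubsets]
  exact ⟨hU, hmem.2.1.trans (card_le_card hTU.subset), by omega⟩

namespace IsMaximalTight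

variable {I : Finset V} {d x : V}

lemma four_mul_degOn_le (hS : IsMaximalTight G w W S) (hadm : Admissible G w W) (hx : x ∈ W \ S) :
    4 * degOn G S x ≤ 1 + w x := by
  obtain ⟨hxW, hxS⟩ := mem_sdiff.1 hx
  have hpos := hadm.one_le_potential _ (insert_subset hxW hS.ssubset.subset) (insert_nonempty x S)
  rw [potential_insert hxS] at hpos
  linarith [hS.potential_le_two]

lemma admissible_contract (hS : IsMaximalTight G w W S) (h : MinimalCounterexample G w W)
    (hI : I ⊆ S) (hd : d ∈ S) :
    Admissible (contract G S (S \ I) d) (contractWeight G w W S I d) (insert d (W \ S)) := by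
  have hSW := hS.ssubset.subset
  have hdeg : ∀ x ∈ W \ S, degOn G S x ≤ 1 := fun x hx ↦ by
    linarith [hS.four_mul_degOn_le h.admissible hx, h.admissible.le_five x (sdiff_subset hx)]
  refine ⟨fun v hv ↦ ?_, fun T hT hne ↦ ?_⟩
  · obtain rfl | hv := mem_insert.1 hv
    · rw [contractWeight_self]
      norm_num
    · rw [contractWeight_of_notMem hd (mem_sdiff.1 hv).2]
      exact cap_le.trans (h.admissible.le_five v (sdiff_subset hv))
  have hQ : T.erase d ⊆ W \ S := subset_insert_iff.1 hT
  set Q := T.erase d with hQdef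
  have hd' : Disjoint S Q := disjoint_sdiff.mono_right hQ
  have hsplit : ∑ x ∈ Q, degOn G S x = ∑ x ∈ Q, degOn G I x + ∑ x ∈ Q, degOn G (S \ I) x := by
    rw [← sum_add_distrib]
    exact sum_congr rfl fun x _ ↦ by rw [degOn_sdiff hI]; ring
  have hI0 : 0 ≤ ∑ x ∈ Q, degOn G I x := sum_nonneg fun x _ ↦ degOn_nonneg x
  have hA0 : 0 ≤ ∑ x ∈ Q, degOn G (S \ I) x := sum_nonneg fun x _ ↦ degOn_nonneg x
  have hlower := le_potential_contractWeight (G := G) (I := I) h.admissible.le_five hd hQ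
  have hunion := potential_union (G := G) (w := w) hd'
  have htight := hS.potential_le_two
  have hSQ : S ∪ Q ⊆ W := union_subset hSW (hQ.trans sdiff_subset)
  -- A set containing `d` is compared with its union with `S`: the weight `2` of `d` makes up for
  -- the potential of `S`.
  by_cases hdT : d ∈ T
  · have hpos := h.admissible.one_le_potential _ hSQ ⟨d, mem_union_left Q hd⟩
    rw [← insert_erase hdT, potential_insert (notMem_erase d T), contractWeight_self, ← hQdef,
      degOn_contract hd hd' fun x hx ↦ (degOn_mono sdiff_subset x).trans (hdeg x (hQ hx))]
    linarith
  · have hTQ : Q = T := erase_eq_of_notMem hdT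
    have hQne : Q.Nonempty := hTQ ▸ hne
    have hposQ := h.admissible.one_le_potential Q (hQ.trans sdiff_subset) hQne
    rw [← hTQ]
    obtain hW | hW := hSQ.eq_or_ssubset
    · have hcut := (hW.symm ▸ h).two_le_sum_degOn hd' ⟨d, hd⟩ hQne
      have hpos := h.admissible.one_le_potential _ hSQ ⟨d, mem_union_left Q hd⟩
      omega
    · have := hS.three_le_potential _ (left_ssubset_union hd' hQne) hW
      omega

end IsMaximalTight

lemma MinimalCounterexample.three_le_potential (h : MinimalCounterexample G w W) (hS : S ⊂ W)
    (hcard : 2 ≤ #S) : 3 ≤ potential G w S := by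
  by_contra! hlt
  obtain ⟨S, hS⟩ := exists_isMaximalTight (G := G) (w := w) hS hcard (by omega)
  obtain ⟨d, hd⟩ : S.Nonempty := card_pos.1 (by have := hS.two_le_card; omega)
  obtain ⟨I, hI⟩ := h.exists_coloring_of_ssubset hS.ssubset
    (h.admissible.mono hS.ssubset.subset)
  have hlt : #(insert d (W \ S)) < #W := by
    have := card_insert_le d (W \ S)
    have := card_sdiff_add_card_eq_card hS.ssubset.subset
    have := hS.two_le_card
    omega
  obtain ⟨J, hJ⟩ := h.exists_coloring _ _ _ hlt (hS.admissible_contract h hI.subset hd)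
  have hdeg : ∀ x ∈ W \ S, 4 * degOn G S x ≤ 1 + w x := fun x hx ↦
    hS.four_mul_degOn_le h.admissible hx
  refine h.not_coloring _ (hI.of_contract hJ hd hS.ssubset.subset (fun x hx ↦ ?_) fun x hx _ ↦ ?_)
  · linarith [hdeg x hx, h.admissible.le_five x (sdiff_subset hx)]
  · linarith [hdeg x hx]

lemma MinimalCounterexample.three_le_potential_insert {u : V} (h : MinimalCounterexample G w W)
    (hS : insert u S ⊂ W) (hu : u ∉ S) (hT : T ⊆ S) (hne : T.Nonempty) :
    3 ≤ potential G w (insert u T) := by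
  refine h.three_le_potential ((insert_subset_insert u hT).trans_ssubset hS) ?_
  rw [card_insert_of_notMem fun huT ↦ hu (hT huT)]
  exact Nat.succ_le_succ hne.card_pos

/-! ### Vertices of degree two and three -/

/-- A vertex `c` of weight `5` whose neighbours in `W` are exactly the two vertices `p` and `q`. -/
structure IsLink (G : SimpleGraph V) (w : V → ℤ) (W : Finset V) (c p q : V) : Prop where
  mem : c ∈ W
  weight_eq : w c = 5
  ne : p ≠ q
  nbrs_eq : nbrs G W c = {p, q}

/-- A free vertex: weight `5` and degree two. -/
def IsFree (G : SimpleGraph V) (w : V → ℤ) (W : Finset V) (c : V) : Prop :=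
  ∃ p q, IsLink G w W c p q

/-- A vertex `v` of `W` whose neighbours in `W` are exactly the three vertices `a`, `b`, `c`. -/
structure IsFork (G : SimpleGraph V) (W : Finset V) (v a b c : V) : Prop where
  mem : v ∈ W
  ne₁₂ : a ≠ b
  ne₁₃ : a ≠ c
  ne₂₃ : b ≠ c
  nbrs_eq : nbrs G W v = {a, b, c}

section Links

variable {X I : Finset V} {a b c p q u v : V}

namespace IsLink

lemma symm (h : IsLink G w W c p q) : IsLink G w W c q p :=
  ⟨h.mem, h.weight_eq, h.ne.symm, h.nbrs_eq.trans (pair_comm p q)⟩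

lemma adj_iff (h : IsLink G w W c p q) (hu : u ∈ W) : G.Adj c u ↔ u = p ∨ u = q := by
  have hmem := mem_nbrs (G := G) (S := W) (u := u) (v := c)
  rw [h.nbrs_eq, mem_insert, mem_singleton] at hmem
  simp [hmem, hu]

lemma left_mem (h : IsLink G w W c p q) : p ∈ W :=
  nbrs_subset c (h.nbrs_eq ▸ mem_insert_self p {q})

lemma right_mem (h : IsLink G w W c p q) : q ∈ W := h.symm.left_mem

lemma adj_left (h : IsLink G w W c p q) : G.Adj c p := (h.adj_iff h.left_mem).2 (Or.inl rfl)

lemma adj_right (h : IsLink G w W c p q) : G.Adj c q := h.symm.adj_left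

lemma degOn_eq_two (h : IsLink G w W c p q) : degOn G W c = 2 := by
  rw [degOn, h.nbrs_eq, card_pair h.ne, Nat.cast_two]

lemma degOn_le_one (h : IsLink G w W c p q) (hX : X ⊆ W) (hp : p ∉ X) : degOn G X c ≤ 1 :=
  degOn_le_one_iff.2 fun u hu hcu v hv hcv ↦ by
    have := (h.adj_iff (hX hu)).1 hcu
    have := (h.adj_iff (hX hv)).1 hcv
    grind

end IsLink

namespace IsFree

lemma mem (h : IsFree G w W c) : c ∈ W := h.choose_spec.choose_spec.mem

lemma weight_eq (h : IsFree G w W c) : w c = 5 := h.choose_spec.choose_spec.weight_eq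

lemma degOn_eq_two (h : IsFree G w W c) : degOn G W c = 2 :=
  h.choose_spec.choose_spec.degOn_eq_two

lemma exists_isLink (h : IsFree G w W c) (hp : p ∈ nbrs G W c) : ∃ q, IsLink G w W c p q := by
  obtain ⟨a, b, hab⟩ := h
  obtain ⟨hpW, hcp⟩ := mem_nbrs.1 hp
  obtain rfl | rfl := (hab.adj_iff hpW).1 hcp
  exacts [⟨b, hab⟩, ⟨a, hab.symm⟩]

lemma degOn_le_one (h : IsFree G w W c) (hX : X ⊆ W) (hp : p ∈ nbrs G W c) (hpX : p ∉ X) :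
    degOn G X c ≤ 1 :=
  (h.exists_isLink hp).choose_spec.degOn_le_one hX hpX

end IsFree

namespace IsFork

lemma swap (h : IsFork G W v a b c) : IsFork G W v b a c :=
  ⟨h.mem, h.ne₁₂.symm, h.ne₂₃, h.ne₁₃, h.nbrs_eq.trans (insert_comm a b {c})⟩

lemma rotate (h : IsFork G W v a b c) : IsFork G W v b c a := by
  refine ⟨h.mem, h.ne₂₃, h.ne₁₂.symm, h.ne₁₃.symm, h.nbrs_eq.trans ?_⟩
  rw [insert_comm, pair_comm]

lemma adj_iff (h : IsFork G W v a b c) (hu : u ∈ W) : G.Adj v u ↔ u = a ∨ u = b ∨ u = c := by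
  have hmem := mem_nbrs (G := G) (S := W) (u := u) (v := v)
  rw [h.nbrs_eq, mem_insert, mem_insert, mem_singleton] at hmem
  simp [hmem, hu]

lemma mem_nbrs_left (h : IsFork G W v a b c) : a ∈ nbrs G W v :=
  h.nbrs_eq ▸ mem_insert_self a {b, c}

end IsFork

namespace IsIFColoring

lemma insert_of_nbrs_subset_pair (h : IsIFColoring G w X I) (hv : v ∉ X) (hw : 3 ≤ w v)
    (hp : p ∈ I) (hq : q ∉ I) (hnbrs : ∀ u ∈ X, G.Adj v u → u = p ∨ u = q) :
    IsIFColoring G w (insert v X) I := by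
  have hsub := h.subset
  refine h.insert_forest hv (h.isForestOn.insert_leaf (by simp [hv]) ?_) ?_ fun _ _ _ ↦ hw
  · exact degOn_le_one_iff.2 (by grind)
  · exact degOn_le_one_iff.2 (by grind)

lemma insert_link_leaf (h : IsIFColoring G w X I) (hc : IsLink G w W c p q) (hX : X ⊆ W)
    (hcX : c ∉ X) (hp : p ∉ X) : IsIFColoring G w (insert c X) I :=
  h.insert_leaf hcX (by rw [hc.weight_eq]; norm_num) (hc.degOn_le_one hX hp)

lemma insert_link (h : IsIFColoring G w X I) (hc : IsLink G w W c p q) (hX : X ⊆ W) (hcX : c ∉ X)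
    (hp : p ∈ I) (hq : q ∉ I) : IsIFColoring G w (insert c X) I :=
  h.insert_of_nbrs_subset_pair hcX (by rw [hc.weight_eq]; norm_num) hp hq fun u hu ↦
    (hc.adj_iff (hX hu)).1

end IsIFColoring

end Links

namespace MinimalCounterexample

variable {C P X : Finset V} {b p q r v : V}

lemma two_le_degOn_sdiff (h : MinimalCounterexample G w W) (hC : C ⊆ W) (hne : (W \ C).Nonempty)
    (hv : v ∈ C) (hnbrs : ∀ x ∈ C, x ≠ v → nbrs G W x ⊆ C) : 2 ≤ degOn G (W \ C) v := by
  have hcut := ((union_sdiff_of_subset hC).symm ▸ h).two_le_sum_degOn disjoint_sdiff ⟨v, hv⟩ hne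
  rwa [sum_degOn_comm, sum_eq_single_of_mem v hv fun x hx hxv ↦ ?_] at hcut
  rw [degOn, Nat.cast_eq_zero, card_eq_zero, eq_empty_iff_forall_notMem]
  intro y hy
  obtain ⟨hyWC, hxy⟩ := mem_nbrs.1 hy
  obtain ⟨hyW, hyC⟩ := mem_sdiff.1 hyWC
  exact hyC (hnbrs x hx hxv (mem_nbrs.2 ⟨hyW, hxy⟩))

lemma not_link_triangle (h : MinimalCounterexample G w W) (hv : IsFork G W v p q r)
    (hp : IsLink G w W p v q) (hq : IsLink G w W q v p) : False := by
  have hr := mem_nbrs.1 hv.rotate.rotate.mem_nbrs_left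
  have hne := hv.ne₁₃
  have hne' := hv.ne₂₃
  have hcut := h.two_le_degOn_sdiff (C := {v, p, q}) (v := v)
    (by simp [insert_subset_iff, hv.mem, hp.mem, hq.mem])
    ⟨r, by simp [hr.1, hr.2.ne', hne.symm, hne'.symm]⟩ (by simp)
    (by simp [hp.nbrs_eq, hq.nbrs_eq, insert_subset_iff])
  have hle : degOn G (W \ {v, p, q}) v ≤ 1 := degOn_le_one_iff.2 fun a ha hva b hb hvb ↦ by
    have := hv.adj_iff (sdiff_subset ha)
    have := hv.adj_iff (sdiff_subset hb)
    grind
  omega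

lemma not_link_square (h : MinimalCounterexample G w W) (hv : IsFork G W v p q r)
    (hp : IsLink G w W p v b) (hb : IsLink G w W b p q) (hq : IsLink G w W q v b) (hbr : b ≠ r) :
    False := by
  have hr := mem_nbrs.1 hv.rotate.rotate.mem_nbrs_left
  have hne := hv.ne₁₃
  have hne' := hv.ne₂₃
  have hcut := h.two_le_degOn_sdiff (C := {v, p, q, b}) (v := v)
    (by simp [insert_subset_iff, hv.mem, hp.mem, hq.mem, hb.mem])
    ⟨r, by simp [hr.1, hr.2.ne', hne.symm, hne'.symm, hbr.symm]⟩ (by simp)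
    (by simp [hp.nbrs_eq, hq.nbrs_eq, hb.nbrs_eq, insert_subset_iff])
  have hle : degOn G (W \ {v, p, q, b}) v ≤ 1 := degOn_le_one_iff.2 fun a ha hva b hb hvb ↦ by
    have := hv.adj_iff (sdiff_subset ha)
    have := hv.adj_iff (sdiff_subset hb)
    grind
  omega

lemma one_le_potential_cap (h : MinimalCounterexample G w W) (hP : #P ≤ 2) (hT : T ⊂ W)
    (hne : T.Nonempty) : 1 ≤ potential G (cap w P 4) T := by
  obtain h2 | h1 := Nat.lt_or_ge 1 #T
  · have hcap := le_potential_cap (G := G) (P := P) (k := 4)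
      (h.admissible.mono hT.subset).le_five (by norm_num)
    have hgap := h.three_le_potential hT h2
    have : #(T ∩ P) ≤ 2 := (card_le_card inter_subset_right).trans hP
    omega
  · obtain ⟨v, rfl⟩ := card_eq_one.1 (le_antisymm h1 hne.card_pos)
    have hpos := h.admissible.one_le_potential {v} hT.subset hne
    rw [potential_singleton] at hpos ⊢
    unfold cap
    split_ifs <;> omega

lemma exists_coloring_cap (h : MinimalCounterexample G w W) (hP : #P ≤ 2) (hX : X ⊂ W) :
    ∃ I, IsIFColoring G (cap w P 4) X I :=
  h.exists_coloring_of_ssubset hX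
    ⟨fun v hv ↦ cap_le.trans (h.admissible.le_five v (hX.subset hv)),
      fun _ hT ↦ h.one_le_potential_cap hP (hT.trans_ssubset hX)⟩

end MinimalCounterexample

/-- The vertices at the far end of a path of length two in `W` that starts at `v`. -/
noncomputable def secondNbrs (G : SimpleGraph V) (W : Finset V) (v : V) : Finset V :=
  (nbrs G W v).biUnion fun c ↦ (nbrs G W c).erase v

lemma mem_secondNbrs {u v : V} :
    u ∈ secondNbrs G W v ↔ ∃ c ∈ nbrs G W v, u ≠ v ∧ u ∈ nbrs G W c := by
  simp only [secondNbrs, mem_biUnion, mem_erase]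

namespace MinimalCounterexample

variable {I P X : Finset V} {c u v x y : V}

lemma not_coloring_sdiff (h : MinimalCounterexample G w W) (hv : v ∈ W) (hwv : w v = 5)
    (hN : ∀ n ∈ nbrs G W v, IsFree G w W n) (hI : IsIFColoring G w ((W \ nbrs G W v).erase v) I)
    (hfree : ∀ q ∈ I, q ∉ secondNbrs G W v) : False := by
  have hvN : v ∉ nbrs G W v := fun hv' ↦ (mem_nbrs.1 hv').2.ne rfl
  have hmem : ∀ u, u ∈ (W \ nbrs G W v).erase v ↔ u ≠ v ∧ u ∈ W ∧ u ∉ nbrs G W v := fun u ↦ by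
    rw [mem_erase, mem_sdiff]
  have hsub := hI.subset
  have hsub' := nbrs_subset (G := G) (S := W) v
  generalize (W \ nbrs G W v).erase v = X at hI hmem hsub
  have hW : insert v (X ∪ nbrs G W v) = W := by ext; grind
  have hXN : X ∪ nbrs G W v ⊆ W := (subset_insert v _).trans hW.subset
  have hvX : v ∉ X ∪ nbrs G W v := by grind
  refine h.not_coloring (insert v I) (hW ▸ (hI.union_leaves ?_ ?_ ?_).insert_indep hvX hwv.ge ?_)
  · exact disjoint_left.2 fun u hu ↦ ((hmem u).1 hu).2.2
  · exact fun n hn ↦ by rw [(hN n hn).weight_eq]; norm_num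
  · exact fun n hn ↦ (hN n hn).degOn_le_one hXN
      (mem_nbrs.2 ⟨hv, (mem_nbrs.1 hn).2.symm⟩) hvX
  · intro n hn hvn
    have hnN := mem_nbrs.2 ⟨hXN hn, hvn⟩
    refine ⟨fun hnI ↦ ((hmem n).1 (hsub hnI)).2.2 hnN, by rw [(hN n hnN).weight_eq]; norm_num,
      fun q hq hnq ↦ hfree q hq (mem_secondNbrs.2 ⟨n, hnN, ?_⟩)⟩
    obtain ⟨hqv, hqW, -⟩ := (hmem q).1 (hsub hq)
    exact ⟨hqv, mem_nbrs.2 ⟨hqW, hnq⟩⟩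

open Classical in
lemma three_le_card_secondNbrs (h : MinimalCounterexample G w W) (hv : v ∈ W) (hwv : w v = 5)
    (hN : ∀ n ∈ nbrs G W v, IsFree G w W n) :
    3 ≤ #{m ∈ secondNbrs G W v | ¬ IsFree G w W m} := by
  by_contra! hlt
  -- At most two second neighbours are not free, and capping them keeps them out of `I`. The
  -- free ones are taken out of the coloring and reinserted as leaves of the forest; then `v` can
  -- join `I`.
  set X := (W \ nbrs G W v).erase v with hX
  have hXW : X ⊂ W := (erase_subset_erase v sdiff_subset).trans_ssubset (erase_ssubset hv)
  set M := {m ∈ X | m ∈ secondNbrs G W v ∧ IsFree G w W m}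
  have hMX : X \ M ∪ M = X := sdiff_union_of_subset (filter_subset _ _)
  obtain ⟨I, hI⟩ := h.exists_coloring_cap (Nat.le_of_lt_succ hlt) hXW
  have hI' := (hI.of_cap.restrict (sdiff_subset : X \ M ⊆ X)).union_leaves (L := M)
    sdiff_disjoint ?_ ?_
  · rw [hMX] at hI'
    refine h.not_coloring_sdiff hv hwv hN hI' fun q hq hq₂ ↦ ?_
    obtain ⟨hqI, hqX, hqM⟩ := by simpa only [mem_inter, mem_sdiff] using hq
    refine hI.notMem_of_cap le_rfl (mem_filter.2 ⟨hq₂, fun hfree ↦ hqM ?_⟩) hqI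
    exact mem_filter.2 ⟨hqX, hq₂, hfree⟩
  · exact fun m hm ↦ by rw [(mem_filter.1 hm).2.2.weight_eq]; norm_num
  · intro m hm
    obtain ⟨-, hm₂, hfree⟩ := mem_filter.1 hm
    obtain ⟨n, hn, -, hnm⟩ := mem_secondNbrs.1 hm₂
    rw [hMX]
    refine hfree.degOn_le_one hXW.subset
      (mem_nbrs.2 ⟨nbrs_subset v hn, (mem_nbrs.1 hnm).2.symm⟩) ?_
    simp [hX, hn]

lemma exists_coloring_sup_edge (h : MinimalCounterexample G w W) (hX : X ⊂ W) (huX : u ∉ X)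
    (hcy : c ≠ y) (hn : ¬ G.Adj c y) (huc : G.Adj u c) (huy : G.Adj u y) (hP : #P ≤ 2)
    (hpot : ∀ T ⊆ X, T.Nonempty → w u - 3 + #P ≤ potential G w (insert u T)) :
    ∃ I, IsIFColoring (G ⊔ edge c y) (cap w P 4) X I := by
  have hle := (h.admissible.mono hX.subset).le_five
  refine h.exists_coloring_of_ssubset hX ⟨fun v hv ↦ cap_le.trans (hle v hv), fun T hT hne ↦ ?_⟩
  -- The new edge stands for the path `c u y`: it costs `4` on a set containing both ends, while
  -- adding `u` to such a set lowers the potential by at least `8 - w u`.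
  by_cases hcyT : c ∈ T ∧ y ∈ T
  · have hu := hpot T hT hne
    have hdeg := two_le_degOn_of_adj hcyT.1 hcyT.2 hcy huc huy
    have hcap := le_potential_cap (G := G) (P := P) (k := 4) (fun v hv ↦ hle v (hT hv))
      (by norm_num)
    have : #(T ∩ P) ≤ #P := card_le_card inter_subset_right
    rw [potential_insert fun huT ↦ huX (hT huT)] at hu
    rw [potential_sup_edge hcy hn hcyT.1 hcyT.2]
    omega
  · exact (h.one_le_potential_cap hP (hT.trans_ssubset hX) hne).trans
      (potential_le_potential_sup_edge hcy hcyT)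

lemma exists_coloring_of_triangle (h : MinimalCounterexample G w W) (hX : X ⊂ W) (huX : u ∉ X)
    (hc : c ∈ X) (hy : y ∈ X) (hcu : IsLink G w W c u y) (huy : G.Adj u y)
    (hpot : ∀ T ⊆ X, T.Nonempty → w u - 3 ≤ potential G w (insert u T)) :
    ∃ I, IsIFColoring G w (X.erase c) I ∧ IsClear G w I y := by
  have hcy := hcu.adj_right.ne
  have hpot' : ∀ T ⊆ X.erase c, y ∈ T → 4 ≤ potential G w T := fun T hT hyT ↦ by
    have hcT : c ∉ T := fun hcT ↦ notMem_erase c X (hT hcT)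
    have hTX : insert c T ⊆ X := insert_subset hc (hT.trans (erase_subset c X))
    have hu := hpot (insert c T) hTX (insert_nonempty c T)
    have hdeg := two_le_degOn_of_adj (mem_insert_self c T) (mem_insert_of_mem hyT) hcy
      hcu.adj_left.symm huy
    have hdeg' := one_le_degOn_iff.2 ⟨y, hyT, hcu.adj_right⟩
    rw [potential_insert fun huT ↦ huX (hTX huT), potential_insert hcT, hcu.weight_eq] at hu
    linarith
  have hadm := h.admissible.mono ((erase_subset c X).trans hX.subset)
  have hyX : y ∈ X.erase c := mem_erase.2 ⟨hcy.symm, hy⟩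
  obtain ⟨I, hI⟩ := h.exists_coloring_of_ssubset ((erase_subset c X).trans_ssubset hX) <|
    .cap (P := {y}) (k := 2) hadm.le_five (by norm_num) fun T hT hne ↦ by
      by_cases hyT : y ∈ T
      · have := hpot' T hT hyT
        simpa [hyT] using this
      · simpa [hyT] using hadm.one_le_potential T hT hne
  have hwy := hpot' {y} (singleton_subset_iff.2 hyX) (mem_singleton_self y)
  rw [potential_singleton] at hwy
  exact ⟨I, hI.of_cap, hI.notMem_of_cap (by norm_num) (mem_singleton_self y), by linarith,
    hI.not_adj_of_cap le_rfl (mem_singleton_self y) hyX⟩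

lemma exists_coloring_of_isLink (h : MinimalCounterexample G w W) (hX : insert u X ⊂ W)
    (huX : u ∉ X) (hwu : w u = 5) (hc : c ∈ X) (hx : x ∈ X) (hy : y ∈ X) (hcy : c ≠ y)
    (hcu : IsLink G w W c u x) (huy : G.Adj u y) (hu : nbrs G X u ⊆ {c, y}) :
    (∃ I, IsIFColoring G w (insert u X) I ∧ IsClear G w I u) ∨
      ∃ I, IsIFColoring G w (X.erase c) I ∧ IsClear G w I x ∧ IsClear G w I y := by
  have hXW : X ⊂ W := (subset_insert u X).trans_ssubset hX
  have hpot : ∀ T ⊆ X, T.Nonempty → 3 ≤ potential G w (insert u T) := fun T hT hne ↦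
    h.three_le_potential_insert hX huX hT hne
  by_cases hxy : x = y
  · subst hxy
    obtain ⟨I, hI, hxI⟩ := h.exists_coloring_of_triangle hXW huX hc hx hcu huy
      fun T hT hne ↦ by linarith [hpot T hT hne]
    exact Or.inr ⟨I, hI, hxI, hxI⟩
  have hn : ¬ G.Adj c y := fun hadj ↦ by
    obtain rfl | rfl := (hcu.adj_iff (hXW.subset hy)).1 hadj
    exacts [huX hy, hxy rfl]
  obtain ⟨I, hI⟩ := h.exists_coloring_sup_edge (P := {y}) hXW huX hcy hn
    hcu.adj_left.symm huy (by simp) fun T hT hne ↦ by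
      rw [card_singleton, Nat.cast_one]
      linarith [hpot T hT hne]
  have hyI := hI.notMem_of_cap le_rfl (mem_singleton_self y)
  replace hI := hI.of_cap
  by_cases hcI : c ∈ I
  · have hclear : ∀ z ∈ X, (G ⊔ edge c y).Adj z c → IsClear G w (I ∩ X.erase c) z :=
      fun z hz ↦ hI.isClear_of_adj le_sup_left hz hcI
    refine Or.inr ⟨_, (hI.anti (fun _ _ _ _ ↦ Or.inl) fun _ _ ↦ le_rfl).restrict
      (erase_subset c X), hclear x hx (Or.inl hcu.adj_right.symm), hclear y hy ?_⟩
    exact ((sup_edge_adj hcy).2 (Or.inr (Or.inl ⟨rfl, rfl⟩))).symm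
  · refine Or.inl ⟨I, hI.subdivide hcy hn huX (by linarith) hu,
      fun huI ↦ huX (hI.subset huI), by linarith, fun q hq huq ↦ ?_⟩
    have := hu (mem_nbrs.2 ⟨hI.subset hq, huq⟩)
    grind

end MinimalCounterexample

namespace IsIFColoring

variable {X I : Finset V} {a b c v x y z : V}

lemma exists_insert_link_link (h : IsIFColoring G w X I) (hX : X ⊆ W)
    (ha : IsLink G w W a v b) (hb : IsLink G w W b a z) (haX : a ∉ X) (hbX : b ∉ X)
    (hv : IsClear G w I v) : ∃ J, IsIFColoring G w (insert a (insert b X)) J := by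
  have hsub := h.subset
  have hab := ha.adj_right.ne
  have hadj : ∀ u ∈ insert b X, u ∈ W := by grind [ha.right_mem]
  by_cases hz : z ∈ I
  · rw [insert_comm]
    refine ⟨I, (h.insert_link_leaf ha.symm hX haX hbX).insert_link hb.symm ?_ ?_ hz ?_⟩ <;>
      grind [ha.mem]
  · refine ⟨insert a I, (h.insert_link_leaf hb hX hbX haX).insert_indep ?_ ha.weight_eq.ge ?_⟩
    · simp [hab, haX]
    · intro p hp hap
      obtain rfl | rfl := (ha.adj_iff (hadj p hp)).1 hap
      · exact hv
      · refine ⟨fun hpI ↦ hbX (hsub hpI), by rw [hb.weight_eq]; norm_num, fun q hq hpq ↦ ?_⟩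
        have := (hb.adj_iff (hX (hsub hq))).1 hpq
        grind

lemma insert_fork_link (h : IsIFColoring G w (X.erase c) I) (hX : X ⊆ W) (hwv : w v = 5)
    (hv : IsFork G W v a c y) (hc : IsLink G w W c v x) (hcX : c ∈ X) (hvX : v ∉ X) (haX : a ∉ X)
    (hx : IsClear G w I x) (hy : IsClear G w I y) : IsIFColoring G w (insert v X) (insert c I) := by
  have hcI := h.insert_indep (notMem_erase c X) hc.weight_eq.ge fun p hp hcp ↦ by
    obtain rfl : p = x := by grind [hc.adj_iff]
    exact hx
  rw [insert_erase hcX] at hcI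
  refine hcI.insert_of_nbrs_subset_pair (q := y) hvX (by rw [hwv]; norm_num) (mem_insert_self c I)
    ?_ fun u hu hvu ↦ ?_
  · grind [hv.ne₂₃, hy.notMem]
  · grind [hv.adj_iff]

lemma insert_fork_center (h : IsIFColoring G w (X.erase c) I) (hX : X ⊆ W) (hwv : w v = 5)
    (hv : IsFork G W v a c y) (hc : IsLink G w W c v x) (hcX : c ∈ X) (hvX : v ∉ X) (haX : a ∉ X)
    (hx : IsClear G w I x) (hy : IsClear G w I y) : IsIFColoring G w (insert v X) (insert v I) := by
  have hsub := h.subset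
  have hX' := h.insert_link_leaf hc ((erase_subset c X).trans hX) (notMem_erase c X) (by grind)
  rw [insert_erase hcX] at hX'
  have hcI : IsClear G w I c := by
    refine ⟨by grind, by rw [hc.weight_eq]; norm_num, fun q hq hcq ↦ ?_⟩
    grind [hc.adj_iff, hx.notMem]
  refine hX'.insert_indep hvX hwv.ge fun p hp hvp ↦ ?_
  have := (hv.adj_iff (hX hp)).1 hvp
  grind

lemma insert_fork (h : IsIFColoring G w (X.erase c) I) (hX : X ⊆ W) (hwv : w v = 5)
    (hv : IsFork G W v a c y) (ha : IsLink G w W a v b) (hb : IsLink G w W b a z)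
    (hc : IsLink G w W c v x) (hcX : c ∈ X) (hvX : v ∉ X) (haX : a ∉ X) (hbX : b ∉ X)
    (hx : IsClear G w I x) (hy : IsClear G w I y) :
    IsIFColoring G w (insert a (insert b (insert v X))) (insert v I) := by
  have hsub := h.subset
  have hab := ha.adj_right.ne
  have hva := ha.adj_left.ne
  have hvb := ha.ne
  have hvI := h.insert_fork_center hX hwv hv hc hcX hvX haX hx hy
  have hbI := hvI.insert_link_leaf hb (insert_subset hv.mem hX) (by grind) (by grind)
  refine hbI.insert_link ha ?_ ?_ (mem_insert_self v I) ?_ <;> grind [hb.mem, hv.mem]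

end IsIFColoring

namespace MinimalCounterexample

variable {a b c d f v x y z : V}

lemma ne_of_isFork (h : MinimalCounterexample G w W) (hv : IsFork G W v a c y)
    (ha : IsLink G w W a v b) (hb : IsLink G w W b a z) (hc : IsLink G w W c v x) :
    b ≠ c ∧ b ≠ y ∧ x ≠ a ∧ x ≠ b := by
  obtain ⟨-, hvy⟩ := mem_nbrs.1 hv.rotate.rotate.mem_nbrs_left
  have hbc : b ≠ c := by
    rintro rfl
    obtain rfl := ((hc.adj_iff ha.mem).1 hb.adj_left).resolve_left ha.adj_left.ne
    exact h.not_link_triangle hv ha hc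
  have hby : b ≠ y := by
    rintro rfl
    obtain rfl := ((hb.adj_iff hv.mem).1 hvy.symm).resolve_left ha.adj_left.ne'
    exact h.not_link_triangle hv.rotate.rotate.swap ha hb.symm
  refine ⟨hbc, hby, ?_, ?_⟩ <;> rintro rfl
  · exact hbc (((ha.adj_iff hc.mem).1 hc.adj_right.symm).resolve_left hc.adj_left.ne).symm
  · obtain rfl := ((hb.adj_iff hc.mem).1 hc.adj_right.symm).resolve_left hv.ne₁₂.symm
    exact h.not_link_square hv ha hb hc hby

lemma not_isFree_of_isFork (h : MinimalCounterexample G w W) (hwv : w v = 5)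
    (hv : IsFork G W v a c y) (ha : IsLink G w W a v b) (hc : IsLink G w W c v x) :
    ¬ IsFree G w W b := by
  intro hb
  obtain ⟨z, hb⟩ := hb.exists_isLink (mem_nbrs.2 ⟨ha.mem, ha.adj_right.symm⟩)
  obtain ⟨hyW, hvy⟩ := mem_nbrs.1 hv.rotate.rotate.mem_nbrs_left
  obtain ⟨hbc, hby, hxa, hxb⟩ := h.ne_of_isFork hv ha hb hc
  have hac := hv.ne₁₂
  have hay := hv.ne₁₃
  have hcW := hc.mem
  have hxW := hc.right_mem
  have hva := ha.adj_left.ne'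
  have hvb := ha.ne
  have hvc := hc.adj_left.ne'
  have hvx := hc.ne
  have hmem : ∀ t, t ∈ W \ {v, a, b} ↔ t ∈ W ∧ t ≠ v ∧ t ≠ a ∧ t ≠ b := by simp
  generalize W \ {v, a, b} = X at hmem
  have hX : X ⊆ W := fun t ht ↦ ((hmem t).1 ht).1
  have hvX : v ∉ X := by simp [hmem]
  have haX : a ∉ insert v X := by simp [hmem, hva.symm]
  have hbX : b ∉ insert v X := by simp [hmem, hvb.symm]
  have hvXW : insert v X ⊆ W := insert_subset hv.mem hX
  have hW : insert a (insert b (insert v X)) = W := by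
    ext t
    grind [ha.mem, hb.mem, hv.mem]
  obtain ⟨I, hI, hvI⟩ | ⟨I, hI, hxI, hyI⟩ := h.exists_coloring_of_isLink (X := X)
    (hvXW.ssubset_of_mem_notMem ha.mem haX) hvX hwv (by grind) (by grind)
    ((hmem y).2 ⟨hyW, hvy.ne', hay.symm, hby.symm⟩) hv.ne₂₃ hc hvy fun t ht ↦ by
      grind [hv.adj_iff, mem_nbrs]
  · obtain ⟨J, hJ⟩ := hI.exists_insert_link_link hvXW ha hb haX hbX hvI
    exact h.not_coloring J (hW ▸ hJ)
  · exact h.not_coloring _ (hW ▸ hI.insert_fork hX hwv hv ha hb hc (by grind) hvX (by grind)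
      (by grind) hxI hyI)

lemma false_of_isLink_of_le_four (h : MinimalCounterexample G w W) (hf : f ∈ W)
    (hwf : 3 ≤ w f) (hwf' : w f ≤ 4) (hnbrs : nbrs G W f = {c, y}) (hcy : c ≠ y)
    (hc : IsLink G w W c f x) : False := by
  obtain ⟨hyW, hfy⟩ := mem_nbrs.1 (hnbrs ▸ mem_insert_of_mem (mem_singleton_self y))
  have hfadj : ∀ u ∈ W, G.Adj f u → u = c ∨ u = y := fun u hu hfu ↦ by
    simpa [hnbrs] using mem_nbrs.2 ⟨hu, hfu⟩
  have hX := erase_ssubset hf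
  have hfX := notMem_erase f W
  have hcX : c ∈ W.erase f := mem_erase.2 ⟨hc.adj_left.ne, hc.mem⟩
  have hyX : y ∈ W.erase f := mem_erase.2 ⟨hfy.ne', hyW⟩
  have hpot : ∀ T ⊆ W.erase f, T.Nonempty → w f - 3 ≤ potential G w (insert f T) :=
    fun T hT _ ↦ by
      have := h.admissible.one_le_potential (insert f T) (insert_subset hf (hT.trans hX.subset))
        (insert_nonempty f T)
      linarith
  have hW := insert_erase hf
  generalize W.erase f = X at *
  by_cases hxy : x = y
  · subst hxy
    obtain ⟨I, hI, hxI⟩ := h.exists_coloring_of_triangle hX hfX hcX hyX hc hfy hpot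
    have hsub := hI.subset
    have hfX' : f ∉ X.erase c := fun hf ↦ hfX (mem_of_mem_erase hf)
    have hfI := hI.insert_leaf hfX' hwf (degOn_le_one_iff.2 (by grind))
    refine h.not_coloring (insert c I) ?_
    have := hfI.insert_indep (v := c) (by grind [hc.adj_left.ne]) hc.weight_eq.ge
      fun p hp hcp ↦ by
        obtain rfl | rfl := (hc.adj_iff (by grind)).1 hcp
        · exact ⟨by grind, hwf, by grind [hxI.notMem]⟩
        · exact hxI
    rwa [insert_comm, insert_erase hcX, hW] at this
  · have hn : ¬ G.Adj c y := by grind [hc.adj_iff, hfy.ne]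
    obtain ⟨I, hI⟩ := h.exists_coloring_sup_edge (P := ∅) hX hfX hcy hn hc.adj_left.symm hfy
      (by simp) (by simpa using hpot)
    exact h.not_coloring I (hW ▸ hI.of_cap.subdivide hcy hn hfX hwf (hnbrs ▸ nbrs_mono hX.subset f))

lemma false_of_isFork_of_le_four (h : MinimalCounterexample G w W) (hwf : 3 ≤ w f)
    (hwf' : w f ≤ 4) (hf : IsFork G W f b c d) (hb : IsLink G w W b f a) (ha : IsLink G w W a b z)
    (hc : IsLink G w W c f x) (hd : IsLink G w W d f y) : False := by
  obtain ⟨had, hac, hyb, -⟩ := h.ne_of_isFork hf.swap.rotate hb ha hd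
  have hyc : y ≠ c := by
    rintro rfl
    obtain rfl := ((hc.adj_iff hd.mem).1 hd.adj_right.symm).resolve_left hd.adj_left.ne
    exact h.not_link_triangle hf.rotate hc hd
  have hbd := hf.ne₁₃
  have hfy := hd.ne
  have hdy := hd.adj_right.ne
  have hyW := hd.right_mem
  have hmem : ∀ t, t ∈ W \ {a, b, d} ↔ t ∈ W ∧ t ≠ a ∧ t ≠ b ∧ t ≠ d := by simp
  generalize W \ {a, b, d} = X at hmem
  have hbX : b ∉ insert d X := by simp [hmem, hbd]
  have haX : a ∉ insert d X := by simp [hmem, had]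
  have hdX : d ∉ X := by simp [hmem]
  have hXW : X ⊆ W := fun t ht ↦ ((hmem t).1 ht).1
  have hdXW : insert d X ⊆ W := insert_subset hd.mem hXW
  have hW : insert b (insert a (insert d X)) = W := by
    ext t
    grind [ha.mem, hb.mem, hd.mem]
  have hfy' : ¬ G.Adj f y := by grind [hf.adj_iff]
  have hdXW' : insert d X ⊂ W := hdXW.ssubset_of_mem_notMem hb.mem hbX
  obtain ⟨I, hI⟩ := h.exists_coloring_sup_edge (X := X) (P := {c})
    ((subset_insert d X).trans_ssubset hdXW') hdX hfy hfy' hd.adj_left hd.adj_right (by simp)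
    fun T hT hne ↦ by
      rw [hd.weight_eq, card_singleton]
      exact h.three_le_potential_insert hdXW' hdX hT hne
  have hcI := hI.notMem_of_cap le_rfl (mem_singleton_self c)
  have hsub := hI.subset
  have hfI : IsClear G w I f := by
    refine ⟨fun hfI ↦ ?_, hwf, fun q hq hfq ↦ ?_⟩
    · have := hI.of_cap.five_le f hfI
      omega
    · grind [hf.adj_iff]
  obtain ⟨J, hJ⟩ := (hI.of_cap.subdivide hfy hfy' hdX (by rw [hd.weight_eq]; norm_num)
    (hd.nbrs_eq ▸ nbrs_mono hXW d)).exists_insert_link_link hdXW hb ha hbX haX hfI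
  exact h.not_coloring J (hW ▸ hJ)

end MinimalCounterexample

/-! ### Claws -/

/-- A vertex `v` of weight `5` whose three neighbours `a`, `b`, `c` are links to `p`, `q`, `r`,
none of which is free. -/
structure IsClaw (G : SimpleGraph V) (w : V → ℤ) (W : Finset V) (v a b c p q r : V) : Prop where
  isFork : IsFork G W v a b c
  weight_eq : w v = 5
  isLink₁ : IsLink G w W a v p
  isLink₂ : IsLink G w W b v q
  isLink₃ : IsLink G w W c v r
  not_isFree₁ : ¬ IsFree G w W p
  not_isFree₂ : ¬ IsFree G w W q
  not_isFree₃ : ¬ IsFree G w W r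

section Claws

variable {I : Finset V} {a b c d p q r t v x y : V}

namespace IsClaw

lemma swap (h : IsClaw G w W v a b c p q r) : IsClaw G w W v b a c q p r :=
  ⟨h.isFork.swap, h.weight_eq, h.isLink₂, h.isLink₁, h.isLink₃, h.not_isFree₂, h.not_isFree₁,
    h.not_isFree₃⟩

lemma pairwise_ne (h : IsClaw G w W v a b c p q r) :
    v ≠ a ∧ v ≠ b ∧ v ≠ c ∧ a ≠ b ∧ a ≠ c ∧ b ≠ c :=
  ⟨h.isLink₁.adj_left.ne', h.isLink₂.adj_left.ne', h.isLink₃.adj_left.ne', h.isFork.ne₁₂,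
    h.isFork.ne₁₃, h.isFork.ne₂₃⟩

lemma notMem_right (h : IsClaw G w W v a b c p q r) : r ∉ ({v, a, b, c} : Finset V) := by
  have hc := h.not_isFree₃
  have hra : r ≠ a := fun hra ↦ hc (hra ▸ ⟨_, _, h.isLink₁⟩)
  have hrb : r ≠ b := fun hrb ↦ hc (hrb ▸ ⟨_, _, h.isLink₂⟩)
  simp [h.isLink₃.ne.symm, h.isLink₃.adj_right.ne', hra, hrb]

lemma notMem_of_adj (h : IsClaw G w W v a b c p q r) (hpr : p ≠ r) (hqr : q ≠ r)
    (ht : G.Adj r t) (htc : t ≠ c) : t ∉ ({v, a, b, c} : Finset V) := by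
  have hr := h.notMem_right
  have hrW := h.isLink₃.right_mem
  simp only [mem_insert, mem_singleton, not_or] at hr ⊢
  refine ⟨?_, ?_, ?_, htc⟩ <;> rintro rfl
  · grind [(h.isFork.adj_iff hrW).1 ht.symm]
  · grind [(h.isLink₁.adj_iff hrW).1 ht.symm]
  · grind [(h.isLink₂.adj_iff hrW).1 ht.symm]

lemma notMem_of_isLink (h : IsClaw G w W v a b c p q r) (hd : IsLink G w W d r x)
    (hdC : d ∉ ({v, a, b, c} : Finset V)) : x ∉ ({v, a, b, c} : Finset V) := by
  have hdp : d ≠ p := fun hdp ↦ h.not_isFree₁ (hdp ▸ ⟨_, _, hd⟩)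
  have hdq : d ≠ q := fun hdq ↦ h.not_isFree₂ (hdq ▸ ⟨_, _, hd⟩)
  have hdr := hd.adj_left.ne
  simp only [mem_insert, mem_singleton, not_or] at hdC ⊢
  refine ⟨?_, ?_, ?_, ?_⟩ <;> rintro rfl
  · grind [(h.isFork.adj_iff hd.mem).1 hd.adj_right.symm]
  · grind [(h.isLink₁.adj_iff hd.mem).1 hd.adj_right.symm]
  · grind [(h.isLink₂.adj_iff hd.mem).1 hd.adj_right.symm]
  · grind [(h.isLink₃.adj_iff hd.mem).1 hd.adj_right.symm]

end IsClaw

namespace MinimalCounterexample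

lemma exists_mem_of_isClaw (h : MinimalCounterexample G w W) (hv : IsClaw G w W v a b c p q r)
    (hI : IsIFColoring G w (W \ {v, a, b, c}) I) : p ∈ I ∨ q ∈ I ∨ r ∈ I := by
  by_contra! ⟨hp, hq, hr⟩
  have hvf := hv.isFork
  have ha := hv.isLink₁
  have hb := hv.isLink₂
  have hc := hv.isLink₃
  have hmem : ∀ t, t ∈ W \ {v, a, b, c} ↔ t ∈ W ∧ t ≠ v ∧ t ≠ a ∧ t ≠ b ∧ t ≠ c := by simp
  generalize W \ {v, a, b, c} = X at hI hmem
  have hsub := hI.subset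
  have hX : X ⊆ W := fun t ht ↦ ((hmem t).1 ht).1
  obtain ⟨hva, hvb, hvc, hab, hac, hbc⟩ := hv.pairwise_ne
  have hIa := hI.insert_link_leaf ha hX (by grind) (by grind)
  have hIb := hIa.insert_link_leaf hb (insert_subset ha.mem hX) (by grind) (by grind)
  have hIc := hIb.insert_link_leaf hc (insert_subset hb.mem (insert_subset ha.mem hX)) (by grind)
    (by grind)
  have hclear : ∀ {d z}, IsLink G w W d v z → d ∉ X → z ∉ I → IsClear G w I d :=
    fun {d z} hd hdX hz ↦ ⟨fun hdI ↦ hdX (hsub hdI), by rw [hd.weight_eq]; norm_num,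
      fun t ht hdt ↦ by grind [hd.adj_iff]⟩
  have hIv := hIc.insert_indep (v := v) (by grind) hv.weight_eq.ge fun t ht hvt ↦ by
    obtain rfl | rfl | rfl := (hvf.adj_iff (by grind [ha.mem, hb.mem, hc.mem])).1 hvt
    exacts [hclear ha (by grind) hp, hclear hb (by grind) hq, hclear hc (by grind) hr]
  have hW : insert v (insert c (insert b (insert a X))) = W := by
    ext t
    grind [ha.mem, hb.mem, hc.mem, hvf.mem]
  exact h.not_coloring _ (hW ▸ hIv)

lemma not_isClear_of_isClaw (h : MinimalCounterexample G w W)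
    (hv : IsClaw G w W v a b c p q r) (hI : IsIFColoring G w (W \ {v, a, b, c}) I) (hp : p ∈ I) :
    ¬ IsClear G w I r := by
  intro hr
  have hvf := hv.isFork
  have ha := hv.isLink₁
  have hb := hv.isLink₂
  have hc := hv.isLink₃
  have hmem : ∀ t, t ∈ W \ {v, a, b, c} ↔ t ∈ W ∧ t ≠ v ∧ t ≠ a ∧ t ≠ b ∧ t ≠ c := by simp
  generalize W \ {v, a, b, c} = X at hI hmem
  have hsub := hI.subset
  have hX : X ⊆ W := fun t ht ↦ ((hmem t).1 ht).1
  obtain ⟨hva, hvb, hvc, hab, hac, hbc⟩ := hv.pairwise_ne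
  have hIc := hI.insert_indep (v := c) (by grind) hc.weight_eq.ge fun t ht hct ↦ by
    obtain rfl : t = r := by grind [hc.adj_iff]
    exact hr
  have hIb := hIc.insert_link_leaf hb (insert_subset hc.mem hX) (by grind) (by grind)
  have hIv := hIb.insert_of_nbrs_subset_pair (v := v) (p := c) (q := b) (by grind)
    (by rw [hv.weight_eq]; norm_num) (mem_insert_self c I) (by grind) fun t ht hvt ↦ by
      grind [hvf.adj_iff, hb.mem, hc.mem]
  have hIa := hIv.insert_link ha.symm (by grind [hvf.mem, hb.mem, hc.mem]) (by grind)
    (mem_insert_of_mem hp) (by grind)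
  have hW : insert a (insert v (insert b (insert c X))) = W := by
    ext t
    grind [ha.mem, hb.mem, hc.mem, hvf.mem]
  exact h.not_coloring _ (hW ▸ hIa)

lemma notMem_of_isClaw (h : MinimalCounterexample G w W)
    (hv : IsClaw G w W v a b c p q r) (hI : IsIFColoring G w (W \ {v, a, b, c}) I) (hp : p ∈ I) :
    r ∉ I := by
  intro hr
  have hvf := hv.isFork
  have ha := hv.isLink₁
  have hb := hv.isLink₂
  have hc := hv.isLink₃
  have hmem : ∀ t, t ∈ W \ {v, a, b, c} ↔ t ∈ W ∧ t ≠ v ∧ t ≠ a ∧ t ≠ b ∧ t ≠ c := by simp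
  generalize W \ {v, a, b, c} = X at hI hmem
  have hsub := hI.subset
  have hX : X ⊆ W := fun t ht ↦ ((hmem t).1 ht).1
  obtain ⟨hva, hvb, hvc, hab, hac, hbc⟩ := hv.pairwise_ne
  have hIb := hI.insert_link_leaf hb hX (by grind) (by grind)
  have hIv := hIb.insert_leaf (v := v) (by grind) (by rw [hv.weight_eq]; norm_num)
    (degOn_le_one_iff.2 (by grind [hvf.adj_iff, hb.mem]))
  have hIa := hIv.insert_link ha.symm (by grind [hvf.mem, hb.mem]) (by grind) hp (by grind)
  have hIc := hIa.insert_link hc.symm (by grind [hvf.mem, ha.mem, hb.mem]) (by grind) hr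
    (by grind)
  have hW : insert c (insert a (insert v (insert b X))) = W := by
    ext t
    grind [ha.mem, hb.mem, hc.mem, hvf.mem]
  exact h.not_coloring _ (hW ▸ hIc)

lemma not_isFork_of_isClaw (h : MinimalCounterexample G w W) (hv : IsClaw G w W v a b c p q r)
    (hpr : p ≠ r) (hqr : q ≠ r) (hwr : w r = 5) (hd : IsLink G w W d r x) :
    ¬ IsFork G W r c d y := by
  intro hr
  obtain ⟨hyW, hry⟩ := mem_nbrs.1 hr.rotate.rotate.mem_nbrs_left
  have hdC := hv.notMem_of_adj hpr hqr hd.adj_left.symm hr.ne₁₂.symm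
  have hyC := hv.notMem_of_adj hpr hqr hry hr.ne₁₃.symm
  have hxC := hv.notMem_of_isLink hd hdC
  have hdX : d ∈ (W \ {v, a, b, c}).erase r := by simp [hd.mem, hd.adj_left.ne, hdC]
  have hyX : y ∈ (W \ {v, a, b, c}).erase r := by simp [hyW, hry.ne', hyC]
  have hxX : x ∈ (W \ {v, a, b, c}).erase r := by simp [hd.right_mem, hd.ne.symm, hxC]
  have hcX : c ∉ (W \ {v, a, b, c}).erase r := by simp
  have hC : insert r ((W \ {v, a, b, c}).erase r) = W \ {v, a, b, c} :=
    insert_erase (mem_sdiff.2 ⟨hv.isLink₃.right_mem, hv.notMem_right⟩)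
  have hCW : W \ {v, a, b, c} ⊂ W :=
    sdiff_subset.ssubset_of_mem_notMem hv.isFork.mem (by simp)
  have hrX := notMem_erase r (W \ {v, a, b, c})
  have hswap : ∀ {I}, IsIFColoring G w (W \ {v, a, b, c}) I →
      IsIFColoring G w (W \ {v, b, a, c}) I := fun {I} hI ↦ by rwa [insert_comm b]
  generalize (W \ {v, a, b, c}).erase r = X at *
  have hXW : X ⊆ W := (subset_insert r X).trans (hC ▸ hCW.subset)
  obtain ⟨I, hI, hrI⟩ | ⟨I, hI, hxI, hyI⟩ := h.exists_coloring_of_isLink (hC ▸ hCW) hrX hwr hdX hxX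
    hyX hr.ne₂₃ hd hry fun t ht ↦ by grind [hr.adj_iff, mem_nbrs]
  · rw [hC] at hI
    obtain hp | hq | hr := h.exists_mem_of_isClaw hv hI
    exacts [h.not_isClear_of_isClaw hv hI hp hrI, h.not_isClear_of_isClaw hv.swap (hswap hI) hq hrI,
      hrI.notMem hr]
  · have hd' := hC ▸ hI.insert_fork_link hXW hwr hr hd hdX hrX hcX hxI hyI
    have hr' := hC ▸ hI.insert_fork_center hXW hwr hr hd hdX hrX hcX hxI hyI
    have hdp : p ≠ d := fun hdp ↦ hv.not_isFree₁ (hdp ▸ ⟨_, _, hd⟩)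
    have hdq : q ≠ d := fun hdq ↦ hv.not_isFree₂ (hdq ▸ ⟨_, _, hd⟩)
    have hpI : p ∉ I := fun hp ↦
      h.notMem_of_isClaw hv hr' (mem_insert_of_mem hp) (mem_insert_self r I)
    have hqI : q ∉ I := fun hq ↦
      h.notMem_of_isClaw hv.swap (hswap hr') (mem_insert_of_mem hq) (mem_insert_self r I)
    have hrI : r ∉ I := fun hrI ↦ hrX (mem_of_mem_erase (hI.subset hrI))
    have := h.exists_mem_of_isClaw hv hd'
    simp only [mem_insert, hdp, hpI, hdq, hqI, hd.adj_left.ne', hrI, or_self] at this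

end MinimalCounterexample

end Claws

/-! ### Discharging -/

/-- A needy vertex: weight `5`, degree three, and all neighbours free. -/
structure IsNeedy (G : SimpleGraph V) (w : V → ℤ) (W : Finset V) (v : V) : Prop where
  mem : v ∈ W
  weight_eq : w v = 5
  degOn_eq : degOn G W v = 3
  isFree : ∀ n ∈ nbrs G W v, IsFree G w W n

lemma IsNeedy.not_isFree {v : V} (h : IsNeedy G w W v) : ¬ IsFree G w W v := fun hv ↦ by
  linarith [h.degOn_eq, hv.degOn_eq_two]

lemma exists_isFork {a v : V} (hv : v ∈ W) (hdeg : degOn G W v = 3) (ha : a ∈ nbrs G W v) :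
    ∃ b c, IsFork G W v a b c := by
  have hcard : #((nbrs G W v).erase a) = 2 := by
    rw [card_erase_of_mem ha]
    unfold degOn at hdeg
    omega
  obtain ⟨b, c, hbc, hN⟩ := card_eq_two.1 hcard
  have hb : b ∈ (nbrs G W v).erase a := by simp [hN]
  have hc : c ∈ (nbrs G W v).erase a := by simp [hN]
  exact ⟨b, c, hv, (ne_of_mem_erase hb).symm, (ne_of_mem_erase hc).symm, hbc,
    by rw [← hN, insert_erase ha]⟩

namespace MinimalCounterexample

variable {c d p q u v : V}

lemma not_isFree_of_isLink (h : MinimalCounterexample G w W) (hc : IsLink G w W c p q)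
    (hp : IsFree G w W p) : ¬ IsFree G w W q := fun hq ↦ by
  classical
  obtain ⟨p', hp⟩ := hp.exists_isLink (mem_nbrs.2 ⟨hc.mem, hc.adj_left.symm⟩)
  obtain ⟨q', hq⟩ := hq.exists_isLink (mem_nbrs.2 ⟨hc.mem, hc.adj_right.symm⟩)
  have hle := h.three_le_card_secondNbrs hc.mem hc.weight_eq fun n hn ↦ by
    rw [hc.nbrs_eq, mem_insert, mem_singleton] at hn
    obtain rfl | rfl := hn
    exacts [⟨_, _, hp⟩, ⟨_, _, hq⟩]
  have hsub : {m ∈ secondNbrs G W c | ¬ IsFree G w W m} ⊆ {p', q'} := fun m hm ↦ by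
    obtain ⟨n, hn, hmc, hm⟩ := mem_secondNbrs.1 (mem_filter.1 hm).1
    rw [hc.nbrs_eq, mem_insert, mem_singleton] at hn
    obtain rfl | rfl := hn
    · grind [hp.nbrs_eq]
    · grind [hq.nbrs_eq]
  have := (card_le_card hsub).trans card_le_two
  omega

lemma exists_isClaw (h : MinimalCounterexample G w W) (hv : IsNeedy G w W v)
    (hc : IsLink G w W c v u) : ∃ a b p q, IsClaw G w W v a b c p q u ∧ p ≠ u ∧ q ≠ u := by
  classical
  obtain ⟨a, b, hf⟩ := exists_isFork hv.mem hv.degOn_eq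
    (mem_nbrs.2 ⟨hc.mem, hc.adj_left.symm⟩)
  replace hf := hf.rotate
  have hlink : ∀ d ∈ nbrs G W v, ∃ p, IsLink G w W d v p := fun d hd ↦
    (hv.isFree d hd).exists_isLink (mem_nbrs.2 ⟨hv.mem, (mem_nbrs.1 hd).2.symm⟩)
  obtain ⟨p, ha⟩ := hlink a hf.mem_nbrs_left
  obtain ⟨q, hb⟩ := hlink b hf.swap.mem_nbrs_left
  have hle := h.three_le_card_secondNbrs hv.mem hv.weight_eq hv.isFree
  set M := {m ∈ secondNbrs G W v | ¬ IsFree G w W m}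
  have hsub : M ⊆ {p, q, u} := fun m hm ↦ by
    obtain ⟨n, hn, hmv, hm⟩ := mem_secondNbrs.1 (mem_filter.1 hm).1
    rw [hf.nbrs_eq, mem_insert, mem_insert, mem_singleton] at hn
    obtain rfl | rfl | rfl := hn
    · grind [ha.nbrs_eq]
    · grind [hb.nbrs_eq]
    · grind [hc.nbrs_eq]
  have hM : M = {p, q, u} := eq_of_subset_of_card_le hsub (card_le_three.trans hle)
  have hfree : ∀ m ∈ ({p, q, u} : Finset V), ¬ IsFree G w W m := fun m hm ↦
    (mem_filter.1 (hM.symm.subset hm)).2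
  refine ⟨a, b, p, q, ⟨hf, hv.weight_eq, ha, hb, hc, ?_, ?_, ?_⟩, ?_, ?_⟩
  · exact hfree p (by simp)
  · exact hfree q (by simp)
  · exact hfree u (by simp)
  all_goals
    rintro rfl
    have := hM ▸ hle
    grind [card_le_two]

lemma not_isFree_of_isNeedy (h : MinimalCounterexample G w W) (hv : IsNeedy G w W v)
    (hc : IsLink G w W c v u) (hwu : w u = 5) (hdeg : degOn G W u = 3) (hd : d ∈ nbrs G W u)
    (hdc : d ≠ c) : ¬ IsFree G w W d := fun hfree ↦ by
  obtain ⟨a, b, p, q, hclaw, hp, hq⟩ := h.exists_isClaw hv hc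
  obtain ⟨y, z, hu⟩ := exists_isFork hc.right_mem hdeg
    (mem_nbrs.2 ⟨hc.mem, hc.adj_right.symm⟩)
  obtain ⟨x, hd'⟩ := hfree.exists_isLink
    (mem_nbrs.2 ⟨hc.right_mem, (mem_nbrs.1 hd).2.symm⟩)
  rw [hu.nbrs_eq, mem_insert, mem_insert, mem_singleton] at hd
  obtain rfl | rfl | rfl := hd
  · exact hdc rfl
  · exact h.not_isFork_of_isClaw hclaw hp hq hwu hd' hu
  · exact h.not_isFork_of_isClaw hclaw hp hq hwu hd' hu.swap.rotate

end MinimalCounterexample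

open Classical in
/-- The part of the charge `6` of a free vertex with neighbours `v` and `q` that it hands to `v`.
A free vertex receives nothing, and the basic split is `3 + 3`; a needy vertex cannot absorb `3`
from each of its three neighbours, so it leaves one unit to the vertex at the other end. -/
noncomputable def share (G : SimpleGraph V) (w : V → ℤ) (W : Finset V) (v q : V) : ℤ :=
  if IsFree G w W v then 0 else if IsFree G w W q then 6
  else 3 + (if IsNeedy G w W q then 1 else 0) - if IsNeedy G w W v then 1 else 0

open Classical in
/-- The charge that `v` receives from its neighbour `c`. For free `c` the sum has a single term, the
one for the other neighbour of `c`. -/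
noncomputable def transfer (G : SimpleGraph V) (w : V → ℤ) (W : Finset V) (c v : V) : ℤ :=
  if IsFree G w W c then ∑ q ∈ (nbrs G W c).erase v, share G w W v q else 0

/-- The total charge that `v` receives. -/
noncomputable def received (G : SimpleGraph V) (w : V → ℤ) (W : Finset V) (v : V) : ℤ :=
  ∑ c ∈ nbrs G W v, transfer G w W c v

section Discharging

variable {c d v p q : V}

lemma share_le_six : share G w W v q ≤ 6 := by
  unfold share
  split_ifs <;> norm_num

lemma share_le_four (hq : ¬ IsFree G w W q) : share G w W v q ≤ 4 := by
  unfold share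
  split_ifs <;> norm_num

lemma share_le_three (hq : ¬ IsFree G w W q) (hq' : ¬ IsNeedy G w W q) :
    share G w W v q ≤ 3 := by
  unfold share
  split_ifs <;> norm_num

lemma share_le_two (hv : IsNeedy G w W v) (hq : ¬ IsFree G w W q) (hq' : ¬ IsNeedy G w W q) :
    share G w W v q ≤ 2 := by
  unfold share
  split_ifs <;> norm_num

lemma IsLink.transfer_eq (hc : IsLink G w W c v q) : transfer G w W c v = share G w W v q := by
  have hN : (nbrs G W c).erase v = {q} := by
    rw [hc.nbrs_eq, erase_insert (notMem_singleton.2 hc.ne)]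
  rw [transfer, if_pos ⟨v, q, hc⟩, hN, sum_singleton]

lemma exists_isLink_of_mem_nbrs (hv : v ∈ W) (hc : c ∈ nbrs G W v) (hfree : IsFree G w W c) :
    ∃ q, IsLink G w W c v q :=
  hfree.exists_isLink (mem_nbrs.2 ⟨hv, (mem_nbrs.1 hc).2.symm⟩)

lemma transfer_of_not_isFree (hc : ¬ IsFree G w W c) : transfer G w W c v = 0 := if_neg hc

lemma transfer_le_six (hv : v ∈ W) (hc : c ∈ nbrs G W v) : transfer G w W c v ≤ 6 := by
  by_cases hfree : IsFree G w W c
  · obtain ⟨q, hcq⟩ := exists_isLink_of_mem_nbrs hv hc hfree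
    exact hcq.transfer_eq ▸ share_le_six
  · rw [transfer_of_not_isFree hfree]
    norm_num

lemma received_le_of_transfer_le {k : ℤ} (hk : ∀ c ∈ nbrs G W v, transfer G w W c v ≤ k) :
    received G w W v ≤ degOn G W v * k := by
  rw [received, degOn, ← nsmul_eq_mul]
  exact sum_le_card_nsmul _ _ _ hk

lemma received_le_sub_one_mul {k : ℤ} (hk : ∀ c ∈ nbrs G W v, transfer G w W c v ≤ k)
    (hd : d ∈ nbrs G W v) (hfree : ¬ IsFree G w W d) :
    received G w W v ≤ (degOn G W v - 1) * k := by
  rw [received, ← add_sum_erase _ _ hd, transfer_of_not_isFree hfree, zero_add]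
  refine (sum_le_card_nsmul _ _ k fun c hc ↦ hk c (mem_of_mem_erase hc)).trans_eq ?_
  rw [nsmul_eq_mul, card_erase_of_mem hd, Nat.cast_pred (card_pos.2 ⟨d, hd⟩), degOn]

lemma IsFree.received_eq_zero (hv : IsFree G w W v) : received G w W v = 0 :=
  sum_eq_zero fun c _ ↦ by
    unfold transfer share
    simp [hv]

namespace MinimalCounterexample

open Classical in
lemma sum_transfer (h : MinimalCounterexample G w W) (c : V) :
    ∑ v ∈ nbrs G W c, transfer G w W c v = if IsFree G w W c then 6 else 0 := by
  split_ifs with hc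
  · obtain ⟨p, q, hc⟩ := hc
    have hpq := h.not_isFree_of_isLink hc
    rw [hc.nbrs_eq, sum_pair hc.ne, hc.transfer_eq, hc.symm.transfer_eq]
    unfold share
    split_ifs <;> grind [IsNeedy.not_isFree]
  · exact sum_eq_zero fun v _ ↦ transfer_of_not_isFree hc

open Classical in
lemma sum_received (h : MinimalCounterexample G w W) :
    ∑ v ∈ W, received G w W v = ∑ c ∈ W, if IsFree G w W c then 6 else 0 := by
  simp only [received, ← h.sum_transfer]
  exact sum_comm' fun v c ↦ by simp only [mem_nbrs, G.adj_comm]; tauto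

lemma received_of_degOn_eq_two (h : MinimalCounterexample G w W) (hv : v ∈ W) (hwv : 3 ≤ w v)
    (hwv' : w v ≤ 4) (hdeg : degOn G W v = 2) : received G w W v = 0 := by
  obtain ⟨p, q, hpq, hN⟩ := card_eq_two.1 (show #(nbrs G W v) = 2 by unfold degOn at hdeg; omega)
  refine sum_eq_zero fun c hc ↦ transfer_of_not_isFree fun hfree ↦ ?_
  obtain ⟨x, hcx⟩ := exists_isLink_of_mem_nbrs hv hc hfree
  rw [hN, mem_insert, mem_singleton] at hc
  obtain rfl | rfl := hc
  · exact h.false_of_isLink_of_le_four hv hwv hwv' hN hpq hcx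
  · exact h.false_of_isLink_of_le_four hv hwv hwv' (hN.trans (pair_comm _ _)) hpq.symm hcx

lemma not_isFree_of_le_four (h : MinimalCounterexample G w W) (hv : v ∈ W) (hwv : 3 ≤ w v)
    (hwv' : w v ≤ 4) (hdeg : degOn G W v = 3) (hN : ∀ n ∈ nbrs G W v, IsFree G w W n)
    (hc : IsLink G w W c v q) : ¬ IsFree G w W q := fun hq ↦ by
  obtain ⟨a, b, hf⟩ := exists_isFork hv hdeg (mem_nbrs.2 ⟨hc.mem, hc.adj_left.symm⟩)
  obtain ⟨x, ha⟩ := exists_isLink_of_mem_nbrs hv hf.swap.mem_nbrs_left (hN a hf.swap.mem_nbrs_left)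
  obtain ⟨y, hb⟩ := exists_isLink_of_mem_nbrs hv hf.rotate.rotate.mem_nbrs_left
    (hN b hf.rotate.rotate.mem_nbrs_left)
  obtain ⟨z, hq⟩ := hq.exists_isLink (mem_nbrs.2 ⟨hc.mem, hc.adj_right.symm⟩)
  exact h.false_of_isFork_of_le_four hwv hwv' hf hc hq ha hb

lemma received_le_of_le_four (h : MinimalCounterexample G w W) (hv : v ∈ W) (hwv : 3 ≤ w v)
    (hwv' : w v ≤ 4) (hdeg : degOn G W v = 3) : received G w W v ≤ 12 := by
  by_cases hN : ∀ n ∈ nbrs G W v, IsFree G w W n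
  · refine (received_le_of_transfer_le (k := 4) fun c hc ↦ ?_).trans (by rw [hdeg]; norm_num)
    obtain ⟨q, hcq⟩ := exists_isLink_of_mem_nbrs hv hc (hN c hc)
    exact hcq.transfer_eq ▸ share_le_four (h.not_isFree_of_le_four hv hwv hwv' hdeg hN hcq)
  · push Not at hN
    obtain ⟨d, hd, hfree⟩ := hN
    have := received_le_sub_one_mul (fun c hc ↦ transfer_le_six hv hc) hd hfree
    omega

lemma received_le_of_forall_isFree (h : MinimalCounterexample G w W) (hv : v ∈ W)
    (hwv : w v = 5) (hN : ∀ n ∈ nbrs G W v, IsFree G w W n) :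
    received G w W v ≤ 6 * degOn G W v - 6 := by
  classical
  have hlink : ∀ c ∈ nbrs G W v, ∃ q, IsLink G w W c v q := fun c hc ↦
    exists_isLink_of_mem_nbrs hv hc (hN c hc)
  choose! g hg using hlink
  have hsub : {m ∈ secondNbrs G W v | ¬ IsFree G w W m} ⊆
      {c ∈ nbrs G W v | ¬ IsFree G w W (g c)}.image g := fun m hm ↦ by
    obtain ⟨hm, hfree⟩ := mem_filter.1 hm
    obtain ⟨c, hc, hmv, hmc⟩ := mem_secondNbrs.1 hm
    have := (hg c hc).nbrs_eq
    grind
  have hcard := (h.three_le_card_secondNbrs hv hwv hN).trans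
    ((card_le_card hsub).trans card_image_le)
  calc received G w W v
      ≤ ∑ c ∈ nbrs G W v, (6 - 2 * if ¬ IsFree G w W (g c) then 1 else 0) :=
        sum_le_sum fun c hc ↦ by
          rw [(hg c hc).transfer_eq]
          split_ifs with hfree
          exacts [share_le_six, share_le_four hfree]
    _ = 6 * degOn G W v - 2 * #{c ∈ nbrs G W v | ¬ IsFree G w W (g c)} := by
        rw [sum_sub_distrib, ← mul_sum, sum_boole, sum_const, nsmul_eq_mul, degOn, mul_comm]
    _ ≤ 6 * degOn G W v - 6 := by omega

lemma received_le_of_five_eq (h : MinimalCounterexample G w W) (hv : v ∈ W) (hwv : w v = 5) :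
    received G w W v ≤ 6 * degOn G W v - 6 := by
  by_cases hN : ∀ n ∈ nbrs G W v, IsFree G w W n
  · exact h.received_le_of_forall_isFree hv hwv hN
  · push Not at hN
    obtain ⟨d, hd, hfree⟩ := hN
    have := received_le_sub_one_mul (fun c hc ↦ transfer_le_six hv hc) hd hfree
    omega

lemma received_le_of_isNeedy (h : MinimalCounterexample G w W) (hv : IsNeedy G w W v) :
    received G w W v ≤ 6 := by
  refine (received_le_of_transfer_le (k := 2) fun c hc ↦ ?_).trans
    (by rw [hv.degOn_eq]; norm_num)
  obtain ⟨q, hc⟩ := exists_isLink_of_mem_nbrs hv.mem hc (hv.isFree c hc)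
  obtain ⟨_, _, _, _, hclaw, -⟩ := h.exists_isClaw hv hc
  obtain ⟨b, _, hf⟩ := exists_isFork hv.mem hv.degOn_eq (mem_nbrs.2 ⟨hc.mem, hc.adj_left.symm⟩)
  refine hc.transfer_eq ▸ share_le_two hv hclaw.not_isFree₃ fun hq ↦ ?_
  exact h.not_isFree_of_isNeedy hq hc.symm hv.weight_eq hv.degOn_eq hf.swap.mem_nbrs_left
    hf.ne₁₂.symm (hv.isFree b hf.swap.mem_nbrs_left)

lemma transfer_le_three (h : MinimalCounterexample G w W) (hv : v ∈ W) (hwv : w v = 5)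
    (hdeg : degOn G W v = 3) (hc : IsLink G w W c v q) (hd : IsLink G w W d v p)
    (hcd : c ≠ d) : transfer G w W c v ≤ 3 := by
  have hd' : d ∈ nbrs G W v := mem_nbrs.2 ⟨hd.mem, hd.adj_left.symm⟩
  obtain ⟨a, b, hf⟩ := exists_isFork hv hdeg (mem_nbrs.2 ⟨hc.mem, hc.adj_left.symm⟩)
  refine hc.transfer_eq ▸ share_le_three ?_ fun hq ↦
    h.not_isFree_of_isNeedy hq hc.symm hwv hdeg hd' hcd.symm ⟨_, _, hd⟩
  rw [hf.nbrs_eq, mem_insert, mem_insert, mem_singleton] at hd'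
  obtain rfl | rfl | rfl := hd'
  · exact absurd rfl hcd
  · exact h.not_isFree_of_isFork hwv hf hc hd
  · exact h.not_isFree_of_isFork hwv hf.swap.rotate hc hd

lemma received_le_of_degOn_eq_three (h : MinimalCounterexample G w W) (hv : v ∈ W)
    (hwv : w v = 5) (hdeg : degOn G W v = 3) : received G w W v ≤ 6 := by
  by_cases hN : ∀ n ∈ nbrs G W v, IsFree G w W n
  · exact h.received_le_of_isNeedy ⟨hv, hwv, hdeg, hN⟩
  push Not at hN
  obtain ⟨d, hd, hfree⟩ := hN
  obtain ⟨a, b, hf⟩ := exists_isFork hv hdeg hd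
  have hsum : received G w W v = transfer G w W a v + transfer G w W b v := by
    rw [received, hf.nbrs_eq, sum_insert (by simp [hf.ne₁₂, hf.ne₁₃]), sum_pair hf.ne₂₃,
      transfer_of_not_isFree hfree, zero_add]
  have ha := hf.swap.mem_nbrs_left
  have hb := hf.rotate.rotate.mem_nbrs_left
  by_cases hfa : IsFree G w W a
  · by_cases hfb : IsFree G w W b
    · obtain ⟨p, hap⟩ := exists_isLink_of_mem_nbrs hv ha hfa
      obtain ⟨q, hbq⟩ := exists_isLink_of_mem_nbrs hv hb hfb
      have := h.transfer_le_three hv hwv hdeg hap hbq hf.ne₂₃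
      have := h.transfer_le_three hv hwv hdeg hbq hap hf.ne₂₃.symm
      omega
    · linarith [transfer_of_not_isFree (v := v) hfb, transfer_le_six (w := w) hv ha]
  · linarith [transfer_of_not_isFree (v := v) hfa, transfer_le_six (w := w) hv hb]

open Classical in
lemma charge_nonpos (h : MinimalCounterexample G w W) (hv : v ∈ W) :
    6 * (w v - 2 * degOn G W v) + received G w W v - (if IsFree G w W v then 6 else 0) ≤ 0 := by
  split_ifs with hfree
  · rw [hfree.received_eq_zero, hfree.weight_eq, hfree.degOn_eq_two]
    norm_num
  have hdeg := h.two_le_degOn hv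
  have hsix := received_le_of_transfer_le fun c hc ↦ transfer_le_six (G := G) (w := w) hv hc
  obtain hwv | hwv | hwv : w v ≤ 2 ∨ (3 ≤ w v ∧ w v ≤ 4) ∨ w v = 5 := by
    have := h.admissible.le_five v hv
    omega
  · linarith
  · obtain hd | hd | hd : degOn G W v = 2 ∨ degOn G W v = 3 ∨ 4 ≤ degOn G W v := by omega
    · linarith [h.received_of_degOn_eq_two hv hwv.1 hwv.2 hd]
    · linarith [h.received_le_of_le_four hv hwv.1 hwv.2 hd]
    · linarith
  · obtain hd | hd | hd : degOn G W v = 2 ∨ degOn G W v = 3 ∨ 4 ≤ degOn G W v := by omega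
    · obtain ⟨p, q, hpq, hN⟩ := card_eq_two.1 (show #(nbrs G W v) = 2 by unfold degOn at hd; omega)
      exact absurd ⟨p, q, hv, hwv, hpq, hN⟩ hfree
    · linarith [h.received_le_of_degOn_eq_three hv hwv hd]
    · linarith [h.received_le_of_five_eq hv hwv]

end MinimalCounterexample

end Discharging

lemma MinimalCounterexample.false (h : MinimalCounterexample G w W) : False := by
  classical
  have hne : W.Nonempty := card_pos.1 (zero_lt_two.trans_le h.two_le_card)
  have hpos := h.admissible.one_le_potential W subset_rfl hne
  have hle := sum_nonpos fun v ↦ h.charge_nonpos (v := v)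
  rw [sum_sub_distrib, sum_add_distrib, h.sum_received, ← mul_sum] at hle
  unfold potential at hpos
  linarith

theorem Admissible.exists_coloring (h : Admissible G w W) : ∃ I, IsIFColoring G w W I := by
  induction hn : #W using Nat.strong_induction_on generalizing G w W with
  | _ n ih =>
    by_contra! hcon
    exact MinimalCounterexample.false
      ⟨h, hcon, fun G' w' W' hlt h' ↦ ih #W' (hn ▸ hlt) h' rfl⟩

omit [DecidableEq V] in
lemma sum_degOn [Finite V] (G : SimpleGraph V) (T : Finset V) :
    ∑ v ∈ T, degOn G T v = 2 * (Nat.card ((⊤ : G.Subgraph).induce (T : Set V)).edgeSet : ℤ) := by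
  classical
  have := Fintype.ofFinite V
  set H := (⊤ : G.Subgraph).induce (T : Set V) with hH
  have hcard : Nat.card H.edgeSet = #H.spanningCoe.edgeFinset := by
    rw [← Subgraph.edgeSet_spanningCoe, Nat.card_eq_fintype_card, edgeFinset_card]
  have hdeg : ∀ v, (H.spanningCoe.degree v : ℤ) = if v ∈ T then degOn G T v else 0 := fun v ↦ by
    have hN : H.spanningCoe.neighborFinset v = if v ∈ T then nbrs G T v else ∅ := by
      ext u
      split_ifs with hv <;> simp [hH, hv, mem_nbrs]
    rw [← card_neighborFinset_eq_degree, hN]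
    split_ifs <;> simp [degOn]
  rw [hcard, ← Nat.cast_ofNat, ← Nat.cast_mul, ← H.spanningCoe.sum_degrees_eq_twice_card_edges,
    Nat.cast_sum, sum_congr rfl fun v _ ↦ hdeg v, sum_ite_mem, univ_inter]

omit [DecidableEq V] in
lemma IsForestOn.isAcyclic (h : IsForestOn G B) : (G.induce (B : Set V)).IsAcyclic := by
  classical
  intro x p hp
  set f := SimpleGraph.Embedding.induce (G := G) (B : Set V)
  have hq := hp.map (f := f.toHom) f.injective
  set q := p.map f.toHom with hqf
  have hsub : q.support.toFinset ⊆ B := fun t ht ↦ by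
    rw [List.mem_toFinset, hqf, Walk.support_map, List.mem_map] at ht
    obtain ⟨s, -, rfl⟩ := ht
    exact s.2
  refine (h _ hsub ⟨_, List.mem_toFinset.2 q.start_mem_support⟩).not_ge ?_
  refine sum_nonpos fun v hv ↦ ?_
  have htwo := hq.ncard_neighborSet_toSubgraph_eq_two (List.mem_toFinset.1 hv)
  have hnbrs : q.toSubgraph.neighborSet v ⊆ nbrs G q.support.toFinset v := fun u hu ↦
    mem_nbrs.2 ⟨List.mem_toFinset.2 (q.mem_verts_toSubgraph.1 hu.snd_mem), hu.adj_sub⟩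
  have hle := Set.ncard_le_ncard hnbrs (finite_toSet _)
  rw [htwo, Set.ncard_coe_finset] at hle
  change (4 : ℤ) - 2 * degOn G q.support.toFinset v ≤ 0
  unfold degOn
  omega

omit [DecidableEq V] in
lemma admissible_of_madLt [Fintype V] (h : MadLt G (5 / 2)) : Admissible G (fun _ ↦ 5) univ where
  le_five _ _ := le_rfl
  one_le_potential T _ hT := by
    have hmad := h ((⊤ : G.Subgraph).induce (T : Set V)) (by simpa using hT)
    have hverts : ((⊤ : G.Subgraph).induce (T : Set V)).verts.ncard = #T := by simp
    have hpos : (0 : ℚ) < #T := Nat.cast_pos.2 hT.card_pos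
    rw [hverts, div_lt_div_iff₀ hpos two_pos] at hmad
    have hlt : (2 * (Nat.card ((⊤ : G.Subgraph).induce (T : Set V)).edgeSet : ℤ)) * 2
        < 5 * (#T : ℤ) := by
      exact_mod_cast hmad
    rw [← sum_degOn] at hlt
    rw [potential, sum_sub_distrib, ← mul_sum, sum_const, nsmul_eq_mul]
    linarith

lemma IsIFColoring.isIFPartition [Fintype V] {I : Finset V} (h : IsIFColoring G w univ I) :
    IsIFPartition G (I : Set V) ((univ \ I : Finset V) : Set V) := by
  refine ⟨?_, disjoint_coe.2 disjoint_sdiff, fun u hu v hv huv ↦ ⟨h.not_adj u hu v hv, ?_⟩,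
    h.isForestOn.isAcyclic⟩
  · rw [← coe_union, union_sdiff_of_subset (subset_univ I), coe_univ]
  · rintro x ⟨hux, hxv⟩
    exact huv (h.eq_of_adj x (mem_univ x) u hu v hv hux.symm hxv)

end IFPartition

/-- If `G` is a finite simple graph with maximum average degree less than `5/2`,
then `G` has an I,F-partition. -/
theorem ifPartition_of_mad_lt {V : Type*} [Fintype V] (G : SimpleGraph V)
    (h : MadLt G (5 / 2)) : ∃ A B : Set V, IsIFPartition G A B := by
  classical
  obtain ⟨I, hI⟩ := (IFPartition.admissible_of_madLt h).exists_coloring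
  exact ⟨_, _, hI.isIFPartition⟩
end

section
/- Every finite forest has star chromatic number at most 3; that is, if T is a finite simple graph with no cycles, then χ_s(T) ≤ 3. -/
open SimpleGraph

/-!
Colour every vertex of a rooted forest by its depth modulo `3`. Along edges `ab`, `bc`, `cd`
that use only two colours, `a` and `c` have equal depth, and so do `b` and `d`. If `b` is deeper
than `a`, then `a` and `c` are both the parent of `b`, so `a = c`; otherwise `b` and `d` are
both the parent of `c`, so `b = d`. Two colour classes thus span no cycle either, since the
first three edges of a cycle have `a ≠ c` and `b ≠ d`.
-/

section StarColoring

variable {V : Type*} {G : SimpleGraph V}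

theorem isAcyclic_of_forall_adj_adj_adj
    (hG : ∀ a b c d : V, G.Adj a b → G.Adj b c → G.Adj c d → a = c ∨ b = d) : G.IsAcyclic := by
  intro a p hp
  match p, hp with
  | .nil, hp => exact hp.ne_nil rfl
  | .cons hab .nil, _ => exact hab.ne rfl
  | .cons _ (.cons _ .nil), hp => simpa using hp.three_le_length
  | .cons (v := b) hab (.cons (v := c) hbc (.cons (v := d) hcd q)), hp =>
    have hnodup : (b :: c :: q.support).Nodup := hp.support_nodup
    have hac : a ≠ c := fun hac =>
      (List.nodup_cons.1 (List.nodup_cons.1 hnodup).2).1 (hac ▸ q.end_mem_support)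
    have hbd : b ≠ d := fun hbd =>
      (List.nodup_cons.1 hnodup).1 (List.mem_cons_of_mem c (hbd ▸ q.start_mem_support))
    exact (hG a b c d hab hbc hcd).elim hac hbd

theorem isStarColoring_of_forall_adj_adj_adj {k : ℕ} {f : V → Fin k}
    (hproper : ∀ u v, G.Adj u v → f u ≠ f v)
    (hbicolored : ∀ a b c d, G.Adj a b → G.Adj b c → G.Adj c d → f a = f c → f b = f d →
      a = c ∨ b = d) :
    IsStarColoring G f := by
  refine ⟨hproper, fun i j => ?_⟩
  have hstar (a b c d : {v | f v = i ∨ f v = j}) (hab : G.Adj a b) (hbc : G.Adj b c)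
      (hcd : G.Adj c d) : a = c ∨ b = d := by
    have hfab := hproper a b hab
    have hfbc := hproper b c hbc
    have hfcd := hproper c d hcd
    have hfac : f a = f c := by grind
    have hfbd : f b = f d := by grind
    simpa only [Subtype.ext_iff] using hbicolored a b c d hab hbc hcd hfac hfbd
  exact ⟨isAcyclic_of_forall_adj_adj_adj hstar, hstar⟩

end StarColoring

/-- `d` is the depth function of a rooting of the forest `G`: adjacent vertices lie on consecutive
levels, and every vertex has at most one neighbor, its parent, on the level just above its own. -/
structure IsForestDepth {V : Type*} (G : SimpleGraph V) (d : V → ℕ) : Prop where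
  eq_add_one_or : ∀ ⦃u v⦄, G.Adj u v → d u = d v + 1 ∨ d v = d u + 1
  parent_unique : ∀ ⦃u v w⦄, G.Adj u w → G.Adj v w → d u + 1 = d w → d v + 1 = d w → u = v

namespace IsForestDepth

variable {V : Type*} {G : SimpleGraph V} {d : V → ℕ}

theorem not_modEq_of_adj (hd : IsForestDepth G d) {u v : V} (huv : G.Adj u v) :
    ¬ d u ≡ d v [MOD 3] := by
  have := hd.eq_add_one_or huv
  unfold Nat.ModEq
  omega

theorem eq_of_modEq_of_adj_of_adj (hd : IsForestDepth G d) {u v w : V} (huv : G.Adj u v)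
    (hvw : G.Adj v w) (hmod : d u ≡ d w [MOD 3]) : d u = d w := by
  have := hd.eq_add_one_or huv
  have := hd.eq_add_one_or hvw
  unfold Nat.ModEq at hmod
  omega

theorem eq_or_eq_of_depth_eq (hd : IsForestDepth G d) {a b c e : V} (hab : G.Adj a b)
    (hbc : G.Adj b c) (hce : G.Adj c e) (hdac : d a = d c) (hdbe : d b = d e) :
    a = c ∨ b = e := by
  rcases hd.eq_add_one_or hab with a_below_b | b_below_a
  · exact .inr (hd.parent_unique hbc hce.symm (by omega) (by omega))
  · exact .inl (hd.parent_unique hab hbc.symm (by omega) (by omega))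

theorem isStarColoring_ofNat (hd : IsForestDepth G d) :
    IsStarColoring G fun v => Fin.ofNat 3 (d v) := by
  have modEq_of_ofNat_eq {m n : ℕ} (hmn : Fin.ofNat 3 m = Fin.ofNat 3 n) : m ≡ n [MOD 3] :=
    congrArg Fin.val hmn
  refine isStarColoring_of_forall_adj_adj_adj
    (fun u v huv heq => hd.not_modEq_of_adj huv (modEq_of_ofNat_eq heq)) ?_
  intro a b c e hab hbc hce hac hbe
  exact hd.eq_or_eq_of_depth_eq hab hbc hce
    (hd.eq_of_modEq_of_adj_of_adj hab hbc (modEq_of_ofNat_eq hac))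
    (hd.eq_of_modEq_of_adj_of_adj hbc hce (modEq_of_ofNat_eq hbe))

end IsForestDepth

section Depth

variable {V : Type*} {G : SimpleGraph V} {r u v : V}

theorem eq_penultimate_of_dist_add_one_eq (hG : G.IsAcyclic) {p : G.Walk r v} (hp : p.IsPath)
    (huv : G.Adj u v) (hdist : G.dist r u + 1 = G.dist r v) : u = p.penultimate := by
  obtain ⟨q, hq⟩ := (p.reachable.trans huv.symm.reachable).exists_walk_length_eq_dist
  have hpath : (q.concat huv).IsPath :=
    (q.concat huv).isPath_of_length_eq_dist (by rw [Walk.length_concat, hq, hdist])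
  have heq : q.concat huv = p :=
    congrArg Subtype.val ((hG.subsingleton_path r v).elim ⟨q.concat huv, hpath⟩ ⟨p, hp⟩)
  rw [← heq, Walk.penultimate_concat]

/-- The root of the component of `v` in `G`: an arbitrary vertex, the same for all vertices of the
component. -/
noncomputable def componentRoot (G : SimpleGraph V) (v : V) : V :=
  (G.connectedComponentMk v).out

theorem reachable_componentRoot (G : SimpleGraph V) (v : V) :
    G.Reachable (componentRoot G v) v :=
  ConnectedComponent.exact (Quot.out_eq (G.connectedComponentMk v))

theorem componentRoot_eq_of_adj (huv : G.Adj u v) : componentRoot G u = componentRoot G v :=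
  congrArg Quot.out (ConnectedComponent.sound huv.reachable)

theorem isForestDepth_dist_componentRoot (hG : G.IsAcyclic) :
    IsForestDepth G fun v => G.dist (componentRoot G v) v where
  eq_add_one_or u v huv := by
    rw [← componentRoot_eq_of_adj huv]
    exact hG.dist_eq_dist_add_one_of_adj_of_reachable _ huv (reachable_componentRoot G u)
  parent_unique u v w huw hvw hu hv := by
    obtain ⟨p, hp⟩ := (reachable_componentRoot G w).exists_isPath
    rw [componentRoot_eq_of_adj huw] at hu
    rw [componentRoot_eq_of_adj hvw] at hv
    exact (eq_penultimate_of_dist_add_one_eq hG hp huw hu).trans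
      (eq_penultimate_of_dist_add_one_eq hG hp hvw hv).symm

end Depth

theorem starChromatic_le_three_of_isAcyclic_general {V : Type*} (T : SimpleGraph V)
    (h : T.IsAcyclic) : StarColorable T 3 :=
  ⟨_, (isForestDepth_dist_componentRoot h).isStarColoring_ofNat⟩

/-- Every finite forest has star chromatic number at most `3`. -/
theorem starChromatic_le_three_of_isAcyclic {V : Type*} [Fintype V] (T : SimpleGraph V)
    (h : T.IsAcyclic) : StarColorable T 3 :=
  starChromatic_le_three_of_isAcyclic_general T h
end
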